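/- Let X be a locally connected continuum contained in the Euclidean plane ℝ². If X has the weak local periodic point property (wLPPP), then X has the local fixed point property (LFPP). -/

import Mathlib

/-- A space has the fixed point property: every continuous self-map has a fixed point. -/
def HasFPP (Y : Type*) [TopologicalSpace Y] : Prop :=
  ∀ f : Y → Y, Continuous f → ∃ x, f x = x

/-- A space has the periodic point property: every continuous self-map has a periodic point. -/
def HasPPP (Y : Type*) [TopologicalSpace Y] : Prop :=
  ∀ f : Y → Y, Continuous f → ∃ x, ∃ n : ℕ, 1 ≤ n ∧ f^[n] x = x

/-- Local fixed point property: there is an open basis whose members have closures with FPP. -/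
def HasLFPP (Y : Type*) [TopologicalSpace Y] : Prop :=
  ∃ 𝓑 : Set (Set Y), TopologicalSpace.IsTopologicalBasis 𝓑 ∧
    ∀ B ∈ 𝓑, HasFPP ↥(closure B)

/-- Weak local fixed point property. -/
def HasWLFPP (Y : Type*) [TopologicalSpace Y] : Prop :=
  ∃ 𝓑 : Set (Set Y), TopologicalSpace.IsTopologicalBasis 𝓑 ∧
    ∀ B ∈ 𝓑, ∀ f : Y → Y, Continuous f → f '' closure B ⊆ B → ∃ x ∈ B, f x = x

/-- Local periodic point property. -/
def HasLPPP (Y : Type*) [TopologicalSpace Y] : Prop :=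
  ∃ 𝓑 : Set (Set Y), TopologicalSpace.IsTopologicalBasis 𝓑 ∧
    ∀ B ∈ 𝓑, HasPPP ↥(closure B)

/-- Weak local periodic point property. -/
def HasWLPPP (Y : Type*) [TopologicalSpace Y] : Prop :=
  ∃ 𝓑 : Set (Set Y), TopologicalSpace.IsTopologicalBasis 𝓑 ∧
    ∀ B ∈ 𝓑, ∀ f : Y → Y, Continuous f → f '' closure B ⊆ B →
      ∃ x ∈ B, ∃ n : ℕ, 1 ≤ n ∧ f^[n] x = x

/-- A subset is a simple closed curve if it is homeomorphic to the unit circle. -/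
def IsSimpleClosedCurve {α : Type*} [TopologicalSpace α] (S : Set α) : Prop :=
  Nonempty (↥S ≃ₜ ↥(Metric.sphere (0 : EuclideanSpace ℝ (Fin 2)) 1))

/-- Covering dimension at most `n`: every finite open cover admits an open shrinking
of order at most `n + 1`. -/
def CoveringDimLE (Y : Type*) [TopologicalSpace Y] (n : ℕ) : Prop :=
  ∀ (ι : Type) [Finite ι] (U : ι → Set Y), (∀ i, IsOpen (U i)) → (⋃ i, U i) = Set.univ →
    ∃ V : ι → Set Y, (∀ i, IsOpen (V i)) ∧ (∀ i, V i ⊆ U i) ∧ (⋃ i, V i) = Set.univ ∧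
      ∀ y : Y, {i | y ∈ V i}.ncard ≤ n + 1

/-- A dendrite: a locally connected (metric) continuum containing no simple closed curve. -/
def IsDendrite {α : Type*} [TopologicalSpace α] (D : Set α) : Prop :=
  IsCompact D ∧ IsConnected D ∧ LocallyConnectedSpace ↥D ∧ ∀ S ⊆ D, ¬ IsSimpleClosedCurve S

/-- A local dendrite: every point has a closed neighborhood which is a dendrite. -/
def IsLocalDendrite (Y : Type*) [TopologicalSpace Y] : Prop :=
  ∀ y : Y, ∃ N : Set Y, N ∈ nhds y ∧ IsClosed N ∧ IsDendrite N

/-!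
A compact locally connected plane set `X` is uniformly locally connected, so each of its points has
arbitrarily small relatively open connected neighbourhoods `W` whose closure `K` is again uniformly
locally connected. Let `H` be `K` together with the bounded components of its complement, that is,
the set of `p` for which `z - p` has no continuous logarithm on `K`.

Suppose that `H` is not contained in `X`, and take `p` in `H` outside `X`. In the preimage of `K`
under `w ↦ p + exp w`, two points with the same image are joined by an arc; shortening it gives a
simple closed curve `S ⊆ K` around `p`. By Eilenberg's theorem every map `S → ℂ \ {0}` is, up to a
logarithm, a power of `z - p`, so `S` is a retract of `ℂ \ {p}`. The retraction followed by an
irrational rotation of `S` maps `X` into `K` without periodic points, which contradicts wLPPP if `K`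
is small.

Hence `H ⊆ X`, and `W ∪ (H \ K)` is an open subset of `X` with closure `H`. For a fixed-point-free
map `f` of `H` into itself, `z - f z` would have a logarithm on `H`, again by Eilenberg's theorem,
since `z - q` has one for each `q ∉ H`. Uniform local connectedness rules this out.
-/

open Set Metric Topology Filter

theorem div_mem_slitPlane_of_norm_sub_lt {a b : ℂ} (h : ‖a - b‖ < ‖b‖) :
    a / b ∈ Complex.slitPlane := by
  have hb : b ≠ 0 := norm_pos_iff.mp ((norm_nonneg _).trans_lt h)
  have hlt : ‖a / b - 1‖ < 1 := by
    rwa [div_sub_one hb, norm_div, div_lt_one (norm_pos_iff.mpr hb)]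
  simpa using Complex.mem_slitPlane_of_norm_lt_one hlt

/-- `HasLogOn u s`: the function `u` has a continuous logarithm on the set `s`. -/
def HasLogOn {X : Type*} [TopologicalSpace X] (u : X → ℂ) (s : Set X) : Prop :=
  ∃ l : X → ℂ, ContinuousOn l s ∧ ∀ x ∈ s, Complex.exp (l x) = u x

namespace HasLogOn

variable {X : Type*} [TopologicalSpace X] {u v : X → ℂ} {s t : Set X}

theorem congr (h : HasLogOn u s) (huv : EqOn v u s) : HasLogOn v s := by
  obtain ⟨l, hl, he⟩ := h
  exact ⟨l, hl, fun x hx => (he x hx).trans (huv hx).symm⟩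

theorem mono (h : HasLogOn u s) (hts : t ⊆ s) : HasLogOn u t := by
  obtain ⟨l, hl, he⟩ := h
  exact ⟨l, hl.mono hts, fun x hx => he x (hts hx)⟩

theorem comp {Y : Type*} [TopologicalSpace Y] {t : Set Y} {f : Y → X} (h : HasLogOn u s)
    (hf : ContinuousOn f t) (hfs : MapsTo f t s) : HasLogOn (fun y => u (f y)) t := by
  obtain ⟨l, hl, he⟩ := h
  exact ⟨l ∘ f, hl.comp hf hfs, fun y hy => he _ (hfs hy)⟩

theorem mul (hu : HasLogOn u s) (hv : HasLogOn v s) : HasLogOn (fun x => u x * v x) s := by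
  obtain ⟨l, hl, he⟩ := hu
  obtain ⟨m, hm, hf⟩ := hv
  exact ⟨fun x => l x + m x, hl.add hm, fun x hx => by rw [Complex.exp_add, he x hx, hf x hx]⟩

theorem inv (hu : HasLogOn u s) : HasLogOn (fun x => (u x)⁻¹) s := by
  obtain ⟨l, hl, he⟩ := hu
  exact ⟨fun x => -l x, hl.neg, fun x hx => by rw [Complex.exp_neg, he x hx]⟩

theorem zpow (hu : HasLogOn u s) (n : ℤ) : HasLogOn (fun x => u x ^ n) s := by
  obtain ⟨l, hl, he⟩ := hu
  exact ⟨fun x => n * l x, continuousOn_const.mul hl, fun x hx => by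
    rw [Complex.exp_int_mul, he x hx]⟩

theorem ne_zero (hu : HasLogOn u s) {x : X} (hx : x ∈ s) : u x ≠ 0 := by
  obtain ⟨l, -, he⟩ := hu
  exact he x hx ▸ Complex.exp_ne_zero _

theorem const {c : ℂ} (hc : c ≠ 0) (s : Set X) : HasLogOn (fun _ => c) s :=
  ⟨fun _ => Complex.log c, continuousOn_const, fun _ _ => Complex.exp_log hc⟩

theorem finset_prod {ι : Type*} (F : Finset ι) {u : ι → X → ℂ}
    (h : ∀ i ∈ F, HasLogOn (u i) s) : HasLogOn (fun x => ∏ i ∈ F, u i x) s := by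
  classical
  induction F using Finset.induction_on with
  | empty => simpa using const one_ne_zero s
  | insert i F hi ih =>
    have hF := ih fun j hj => h j (Finset.mem_insert_of_mem hj)
    exact ((h i (Finset.mem_insert_self i F)).mul hF).congr fun x _ => Finset.prod_insert hi

theorem div_of_norm_sub_lt (hu : ContinuousOn u s) (hv : ContinuousOn v s)
    (h : ∀ x ∈ s, ‖u x - v x‖ < ‖v x‖) : HasLogOn (fun x => u x / v x) s :=
  have hslit : ∀ x ∈ s, u x / v x ∈ Complex.slitPlane := fun x hx =>
    div_mem_slitPlane_of_norm_sub_lt (h x hx)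
  ⟨fun x => Complex.log (u x / v x),
    (hu.div hv fun x hx => norm_pos_iff.mp ((norm_nonneg _).trans_lt (h x hx))).clog hslit,
    fun x hx => Complex.exp_log (Complex.slitPlane_ne_zero (hslit x hx))⟩

end HasLogOn

theorem exists_continuous_eqOn_of_continuousOn {X : Type*} [TopologicalSpace X] [NormalSpace X]
    {s : Set X} {l : X → ℂ} (hl : ContinuousOn l s) (hs : IsClosed s) :
    ∃ g : X → ℂ, Continuous g ∧ EqOn g l s := by
  obtain ⟨g, hg⟩ := ContinuousMap.exists_restrict_eq hs
    ⟨s.domRestrict l, continuousOn_iff_continuous_domRestrict.mp hl⟩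
  exact ⟨g, g.continuous, fun x hx => by simpa using DFunLike.congr_fun hg ⟨x, hx⟩⟩

theorem HasLogOn.exists_continuous {X : Type*} [TopologicalSpace X] [NormalSpace X]
    {u : X → ℂ} {s : Set X} (hu : HasLogOn u s) (hs : IsClosed s) :
    ∃ l : X → ℂ, Continuous l ∧ ∀ x ∈ s, Complex.exp (l x) = u x := by
  obtain ⟨l, hl, he⟩ := hu
  obtain ⟨g, hg, hgl⟩ := exists_continuous_eqOn_of_continuousOn hl hs
  exact ⟨g, hg, fun x hx => by rw [hgl hx, he x hx]⟩

theorem hasLogOn_of_convex {E : Type*} [NormedAddCommGroup E] [NormedSpace ℝ E] {U : Set E}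
    (hU : Convex ℝ U) (hUo : IsOpen U) {g : E → ℂ} (hg : ContinuousOn g U)
    (hg0 : ∀ x ∈ U, g x ≠ 0) : HasLogOn g U := by
  obtain rfl | hne := U.eq_empty_or_nonempty
  · exact ⟨0, continuousOn_empty _, by simp⟩
  have : ContractibleSpace U := hU.contractibleSpace hne
  have hsc : IsSimplyConnected U := by
    unfold IsSimplyConnected
    infer_instance
  obtain ⟨l, hl, he⟩ := Complex.exists_continuousOn_eqOn_exp_comp hsc hUo hg
    (by rintro ⟨x, hx, h⟩; exact hg0 x hx h)
  exact ⟨l, hl, he⟩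

theorem exists_continuous_log {E : Type*} [NormedAddCommGroup E] [NormedSpace ℝ E] {g : E → ℂ}
    (hg : Continuous g) (hg0 : ∀ x, g x ≠ 0) :
    ∃ l : E → ℂ, Continuous l ∧ ∀ x, Complex.exp (l x) = g x := by
  obtain ⟨l, hl, he⟩ := hasLogOn_of_convex convex_univ isOpen_univ hg.continuousOn
    fun x _ => hg0 x
  exact ⟨l, continuousOn_univ.mp hl, fun x => he x (mem_univ x)⟩

theorem sub_eq_sub_of_exp_eq {X : Type*} [TopologicalSpace X] {s : Set X}
    (hs : IsPreconnected s) {l m : X → ℂ} (hl : ContinuousOn l s) (hm : ContinuousOn m s)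
    (h : ∀ x ∈ s, Complex.exp (l x) = Complex.exp (m x)) {x y : X} (hx : x ∈ s) (hy : y ∈ s) :
    l x - m x = l y - m y := by
  have hone : ∀ a ∈ s, Complex.exp (l a - m a) = 1 := fun a ha => by
    rw [Complex.exp_sub, h a ha, div_self (Complex.exp_ne_zero _)]
  exact Complex.isCoveringMap_exp.constOn_of_comp hs (hl.sub hm)
    (fun a ha b hb => Subtype.ext ((hone a ha).trans (hone b hb).symm)) hx hy

theorem eq_zero_of_hasLogOn_zpow_sphere {c : ℂ} {R : ℝ} (hR : 0 < R) {n : ℤ}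
    (h : HasLogOn (fun z => (z - c) ^ n) (sphere c R)) : n = 0 := by
  obtain ⟨l, hl, he⟩ := h
  have hmem : ∀ t : ℝ, circleMap c R t ∈ sphere c R := circleMap_mem_sphere c hR.le
  have hlog : ∀ t : ℝ, Complex.exp (l (circleMap c R t)) =
      Complex.exp (n * (Real.log R + t * Complex.I)) := fun t => by
    rw [he _ (hmem t)]
    simp only [Complex.exp_int_mul, Complex.exp_add, ← Complex.ofReal_exp, Real.exp_log hR,
      circleMap_sub_center, circleMap_zero]
  have hcongr := sub_eq_sub_of_exp_eq isPreconnected_univ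
    (hl.comp (continuous_circleMap c R).continuousOn fun t _ => hmem t)
    (by fun_prop) (fun t _ => hlog t) (mem_univ 0) (mem_univ (2 * Real.pi))
  have hper : circleMap c R (2 * Real.pi) = circleMap c R 0 := by
    simpa using periodic_circleMap c R 0
  simpa [hper, Real.pi_ne_zero] using hcongr

theorem hasLogOn_sub_of_subset_ball {K : Set ℂ} {c q : ℂ} {R : ℝ} (hK : K ⊆ ball c R)
    (hq : q ∉ ball c R) : HasLogOn (fun z => z - q) K := by
  obtain rfl | ⟨z, hz⟩ := K.eq_empty_or_nonempty
  · exact ⟨0, continuousOn_empty _, by simp⟩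
  have hcq : c - q ≠ 0 := sub_ne_zero.mpr fun h => hq (h ▸ mem_ball_self (pos_of_mem_ball (hK hz)))
  have hdiv : HasLogOn (fun z => (z - q) / (c - q)) K := by
    refine HasLogOn.div_of_norm_sub_lt (by fun_prop) (by fun_prop) fun z hz => ?_
    rw [sub_sub_sub_cancel_right, ← dist_eq_norm, ← dist_eq_norm, dist_comm c q]
    exact (hK hz).trans_le (not_lt.mp hq)
  exact (hdiv.mul (HasLogOn.const hcq K)).congr fun z _ => (div_mul_cancel₀ _ hcq).symm

theorem eventually_hasLogOn_sub_div_sub {K : Set ℂ} (hK : IsClosed K) {p : ℂ} (hp : p ∉ K) :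
    ∀ᶠ q in 𝓝 p, q ∉ K ∧ HasLogOn (fun z => (z - q) / (z - p)) K := by
  obtain ⟨ε, hε, hball⟩ := Metric.isOpen_iff.mp hK.isOpen_compl p hp
  filter_upwards [ball_mem_nhds p hε] with q hq
  refine ⟨hball hq, HasLogOn.div_of_norm_sub_lt (by fun_prop) (by fun_prop) fun z hz => ?_⟩
  rw [sub_sub_sub_cancel_left, ← dist_eq_norm, ← dist_eq_norm, dist_comm p q]
  exact (mem_ball.mp hq).trans_le (not_lt.mp fun hzp => hball hzp hz)

theorem eventually_hasLogOn_mul_sub_iff {K : Set ℂ} (hK : IsClosed K) (u : ℂ → ℂ) {p : ℂ}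
    (hp : p ∉ K) : ∀ᶠ q in 𝓝 p, q ∉ K ∧
      (HasLogOn (fun z => u z * (z - q)) K ↔ HasLogOn (fun z => u z * (z - p)) K) := by
  filter_upwards [eventually_hasLogOn_sub_div_sub hK hp] with q ⟨hq, hlog⟩
  have hne : ∀ {r : ℂ}, r ∉ K → ∀ z ∈ K, z - r ≠ 0 := fun hr z hz =>
    sub_ne_zero.mpr fun h => hr (h ▸ hz)
  refine ⟨hq, fun h => (h.mul hlog.inv).congr fun z hz => ?_,
    fun h => (h.mul hlog).congr fun z hz => ?_⟩ <;>
  · have hzp := hne hp z hz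
    have hzq := hne hq z hz
    field_simp

theorem isOpen_setOf_hasLogOn_mul_sub {K : Set ℂ} (hK : IsClosed K) (u : ℂ → ℂ) :
    IsOpen {q | q ∉ K ∧ HasLogOn (fun z => u z * (z - q)) K} :=
  isOpen_iff_mem_nhds.mpr fun _ hp =>
    (eventually_hasLogOn_mul_sub_iff hK u hp.1).mono fun _ hq => ⟨hq.1, hq.2.mpr hp.2⟩

theorem isOpen_setOf_not_hasLogOn_mul_sub {K : Set ℂ} (hK : IsClosed K) (u : ℂ → ℂ) :
    IsOpen {q | q ∉ K ∧ ¬ HasLogOn (fun z => u z * (z - q)) K} :=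
  isOpen_iff_mem_nhds.mpr fun _ hp =>
    (eventually_hasLogOn_mul_sub_iff hK u hp.1).mono fun _ hq => ⟨hq.1, fun h => hp.2 (hq.2.mp h)⟩

theorem hasLogOn_iUnion_of_isOpen {X ι : Type*} [TopologicalSpace X] {u : X → ℂ}
    {U : ι → Set X} {l : ι → X → ℂ} (hU : ∀ i, IsOpen (U i)) (hl : ∀ i, ContinuousOn (l i) (U i))
    (he : ∀ i, ∀ x ∈ U i, Complex.exp (l i x) = u x)
    (hcompat : ∀ i j, EqOn (l i) (l j) (U i ∩ U j)) : HasLogOn u (⋃ i, U i) := by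
  classical
  let L : X → ℂ := fun x => if hx : ∃ i, x ∈ U i then l hx.choose x else 0
  have hL : ∀ i, EqOn L (l i) (U i) := fun i x hx => by
    have hex : ∃ j, x ∈ U j := ⟨i, hx⟩
    simp only [L, dif_pos hex, hcompat hex.choose i ⟨hex.choose_spec, hx⟩]
  refine ⟨L, ContinuousOn.iUnion_of_isOpen (fun i => (hl i).congr (hL i)) hU, fun x hx => ?_⟩
  obtain ⟨i, hi⟩ := mem_iUnion.mp hx
  rw [hL i hi, he i x hi]

theorem hasLogOn_iUnion_of_pairwise_disjoint {X ι : Type*} [TopologicalSpace X] {u : X → ℂ}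
    {U : ι → Set X} (hU : ∀ i, IsOpen (U i)) (hd : Pairwise (Function.onFun Disjoint U))
    (h : ∀ i, HasLogOn u (U i)) : HasLogOn u (⋃ i, U i) := by
  choose l hl he using h
  refine hasLogOn_iUnion_of_isOpen hU hl he fun i j x hx => ?_
  obtain rfl : i = j := by
    by_contra hij
    exact disjoint_left.mp (hd hij) hx.1 hx.2
  rfl

theorem HasLogOn.ofReal_of_pos {X : Type*} [TopologicalSpace X] {s : Set X} {ρ : X → ℝ}
    (hρ : ContinuousOn ρ s) (hpos : ∀ x ∈ s, 0 < ρ x) : HasLogOn (fun x => (ρ x : ℂ)) s :=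
  ⟨fun x => (Real.log (ρ x) : ℂ),
    Complex.continuous_ofReal.comp_continuousOn (hρ.log fun x hx => (hpos x hx).ne'),
    fun x hx => by rw [← Complex.ofReal_exp, Real.exp_log (hpos x hx)]⟩

theorem exists_eq_mul_add_mul_conj (A : ℂ →L[ℝ] ℂ) :
    ∃ a b : ℂ, (∀ w, A w = a * w + b * starRingEnd ℂ w) ∧ A.det = ‖a‖ ^ 2 - ‖b‖ ^ 2 := by
  refine ⟨(A 1 - Complex.I * A Complex.I) / 2, (A 1 + Complex.I * A Complex.I) / 2,
    fun w => ?_, ?_⟩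
  · have hA : A w = w.re * A 1 + w.im * A Complex.I := by
      conv_lhs => rw [show w = w.re • (1 : ℂ) + w.im • Complex.I by simp [Complex.re_add_im]]
      rw [map_add, map_smul, map_smul, Complex.real_smul, Complex.real_smul]
    have hconj : starRingEnd ℂ w = w.re - w.im * Complex.I := by
      apply Complex.ext <;> simp
    have hw : w = w.re + w.im * Complex.I := (Complex.re_add_im w).symm
    rw [hA, hconj]
    conv_rhs => enter [1, 2]; rw [hw]
    linear_combination (w.im * A Complex.I) * Complex.I_sq
  · rw [ContinuousLinearMap.det, ← LinearMap.det_toMatrix Complex.basisOneI, Matrix.det_fin_two,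
      ← Complex.normSq_eq_norm_sq, ← Complex.normSq_eq_norm_sq]
    simp [LinearMap.toMatrix_apply, Complex.normSq_apply]
    ring

theorem exists_hasLogOn_div_of_hasFDerivAt {F L : ℂ → ℂ} {A : ℂ →L[ℝ] ℂ} {p : ℂ} {c : ℝ}
    (hF : Continuous F) (hA : HasFDerivAt F A p) (hFp : F p = 0) (hL : Continuous L)
    (hc : 0 < c) (hAL : ∀ w, ‖A w - L w‖ + c * ‖w‖ ≤ ‖L w‖) :
    ∃ V ∈ 𝓝 p, HasLogOn (fun z => F z / L (z - p)) (V \ {p}) := by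
  refine ⟨_, hA.isLittleO.def (half_pos hc), HasLogOn.div_of_norm_sub_lt hF.continuousOn
    (by fun_prop) fun z ⟨hz, hzp⟩ => ?_⟩
  have hpos : 0 < ‖z - p‖ := norm_pos_iff.mpr (sub_ne_zero.mpr hzp)
  have herr : ‖F z - A (z - p)‖ ≤ c / 2 * ‖z - p‖ := by simpa [hFp] using hz
  calc ‖F z - L (z - p)‖ ≤ ‖F z - A (z - p)‖ + ‖A (z - p) - L (z - p)‖ :=
        norm_sub_le_norm_sub_add_norm_sub _ _ _
    _ < ‖L (z - p)‖ := by nlinarith [hAL (z - p)]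

theorem exists_hasLogOn_mul_zpow_of_hasFDerivAt {F : ℂ → ℂ} {A : ℂ →L[ℝ] ℂ} {p : ℂ}
    (hF : Continuous F) (hA : HasFDerivAt F A p) (hFp : F p = 0) (hdet : A.det ≠ 0) :
    ∃ ε : ℤ, ∃ V ∈ 𝓝 p, HasLogOn (fun z => F z * (z - p) ^ ε) (V \ {p}) := by
  obtain ⟨a, b, hab, hdet_eq⟩ := exists_eq_mul_add_mul_conj A
  have hne : ‖b‖ ≠ ‖a‖ := fun h => hdet (by rw [hdet_eq, h, sub_self])
  rcases lt_or_gt_of_ne hne with hlt | hlt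
  · have ha : a ≠ 0 := norm_pos_iff.mp ((norm_nonneg _).trans_lt hlt)
    obtain ⟨V, hV, hlog⟩ := exists_hasLogOn_div_of_hasFDerivAt (L := fun w => a * w) hF hA hFp
      (by fun_prop) (sub_pos.mpr hlt) fun w => by
        rw [hab, add_sub_cancel_left, norm_mul, norm_mul, RCLike.norm_conj]
        linarith
    refine ⟨-1, V, hV, (hlog.mul (HasLogOn.const ha _)).congr fun z hz => ?_⟩
    have hzp : z - p ≠ 0 := sub_ne_zero.mpr hz.2
    rw [zpow_neg_one]
    field_simp
  · have hb : b ≠ 0 := norm_pos_iff.mp ((norm_nonneg _).trans_lt hlt)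
    obtain ⟨V, hV, hlog⟩ := exists_hasLogOn_div_of_hasFDerivAt (L := fun w => b * starRingEnd ℂ w)
      hF hA hFp (by fun_prop) (sub_pos.mpr hlt) fun w => by
        rw [hab, add_sub_cancel_right, norm_mul, norm_mul, RCLike.norm_conj]
        linarith
    have hnormSq : HasLogOn (fun z => (Complex.normSq (z - p) : ℂ)) (V \ {p}) :=
      HasLogOn.ofReal_of_pos (by fun_prop) fun z hz =>
        Complex.normSq_pos.mpr (sub_ne_zero.mpr hz.2)
    refine ⟨1, V, hV, ((hlog.mul (HasLogOn.const hb _)).mul hnormSq).congr fun z hz => ?_⟩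
    have hconj : starRingEnd ℂ (z - p) ≠ 0 := (map_ne_zero _).mpr (sub_ne_zero.mpr hz.2)
    simp only [← Complex.mul_conj, zpow_one]
    field_simp

theorem exists_continuousOn_ne_zero_eqOn_compl {X : Type*} [TopologicalSpace X] [NormalSpace X]
    {Ω P O : Set X} {G : X → ℂ} (hP : IsClosed P) (hO : IsOpen O) (hPO : P ⊆ O)
    (hG : ContinuousOn G (Ω \ P)) (hG0 : ∀ x ∈ Ω \ P, G x ≠ 0) (hlog : HasLogOn G (O \ P)) :
    ∃ H : X → ℂ, ContinuousOn H Ω ∧ (∀ x ∈ Ω, H x ≠ 0) ∧ EqOn H G Oᶜ := by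
  classical
  obtain ⟨N, hN, hPN, hNO⟩ := normal_exists_closure_subset hP hO hPO
  have hfr : frontier N ⊆ O \ P := fun x hx =>
    ⟨hNO hx.1, fun hxP => hx.2 (hN.interior_eq.symm ▸ hPN hxP)⟩
  obtain ⟨l, hl, he⟩ := (hlog.mono hfr).exists_continuous isClosed_frontier
  have hdisj : ∀ {x}, x ∉ N → x ∉ P := fun hx hxP => hx (hPN hxP)
  refine ⟨N.piecewise (fun x => Complex.exp (l x)) G, ?_, fun x hx => ?_, fun x hx => ?_⟩
  · refine ContinuousOn.piecewise (fun x hx => he x hx.2) (by fun_prop) (hG.mono ?_)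
    rintro x ⟨hx, hxN⟩
    refine ⟨hx, fun hxP => ?_⟩
    exact (closure_compl (s := N) ▸ hxN) (hN.interior_eq.symm ▸ hPN hxP)
  · by_cases hxN : x ∈ N
    · simp only [piecewise_eq_of_mem _ _ _ hxN, Complex.exp_ne_zero, ne_eq, not_false_iff]
    · rw [piecewise_eq_of_notMem _ _ _ hxN]
      exact hG0 x ⟨hx, hdisj hxN⟩
  · exact piecewise_eq_of_notMem _ _ _ fun hxN => hx (hNO (subset_closure hxN))

theorem exists_nhds_hasLogOn_prod_zpow {P : Finset ℂ} {p : ℂ} (hp : p ∉ P) (ε : ℂ → ℤ) :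
    ∃ V ∈ 𝓝 p, HasLogOn (fun z => ∏ q ∈ P, (z - q) ^ ε q) V := by
  obtain ⟨r, hr, hball⟩ := Metric.isOpen_iff.mp P.finite_toSet.isClosed.isOpen_compl p hp
  exact ⟨ball p r, ball_mem_nhds p hr, HasLogOn.finset_prod P fun q hq =>
    (hasLogOn_sub_of_subset_ball subset_rfl fun hqr => hball hqr hq).zpow _⟩

theorem exists_hasLogOn_mul_prod_zpow {Ω K : Set ℂ} {P : Finset ℂ} {F : ℂ → ℂ}
    (hΩ : Convex ℝ Ω) (hΩo : IsOpen Ω) (hKΩ : K ⊆ Ω) (hK : IsClosed K)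
    (hPK : ∀ p ∈ P, p ∉ K) (hF : ContinuousOn F (Ω \ P)) (hF0 : ∀ z ∈ Ω \ P, F z ≠ 0)
    (hloc : ∀ p ∈ P, ∃ ε : ℤ, ∃ V ∈ 𝓝 p, HasLogOn (fun z => F z * (z - p) ^ ε) (V \ {p})) :
    ∃ ε : ℂ → ℤ, HasLogOn (fun z => F z * ∏ p ∈ P, (z - p) ^ ε p) K := by
  classical
  choose! ε V hV hlog using hloc
  refine ⟨ε, ?_⟩
  set G : ℂ → ℂ := fun z => F z * ∏ p ∈ P, (z - p) ^ ε p with hG_def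
  have hsub : ∀ z ∉ (P : Set ℂ), ∀ p ∈ P, z - p ≠ 0 := fun z hz p hp =>
    sub_ne_zero.mpr fun h => hz (h ▸ hp)
  have hG : ContinuousOn G (Ω \ P) := hF.mul <| continuousOn_finsetProd _ fun p hp =>
    ContinuousOn.zpow₀ (by fun_prop) _ fun z hz => Or.inl (hsub z hz.2 p hp)
  have hG0 : ∀ z ∈ Ω \ (P : Set ℂ), G z ≠ 0 := fun z hz =>
    mul_ne_zero (hF0 z hz) (Finset.prod_ne_zero_iff.mpr fun p hp =>
      zpow_ne_zero _ (hsub z hz.2 p hp))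
  have hGloc : ∀ p ∈ P, ∃ W, IsOpen W ∧ p ∈ W ∧ W ⊆ Kᶜ ∧ HasLogOn G (W \ {p}) := fun p hp => by
    obtain ⟨W, hW, hWlog⟩ := exists_nhds_hasLogOn_prod_zpow (P.notMem_erase p) ε
    obtain ⟨O, hO, hOo, hpO⟩ := _root_.mem_nhds_iff.mp
      (inter_mem (inter_mem (hV p hp) hW) (hK.isOpen_compl.mem_nhds (hPK p hp)))
    refine ⟨O, hOo, hpO, fun z hz => (hO hz).2, ?_⟩
    refine (((hlog p hp).mono fun z hz => ⟨(hO hz.1).1.1, hz.2⟩).mul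
      (hWlog.mono fun z hz => (hO hz.1).1.2)).congr fun z _ => ?_
    simp only [hG_def, ← Finset.mul_prod_erase P _ hp, mul_assoc]
  choose! W hWo hpW hWK hWlog using hGloc
  obtain ⟨U, hU, hUd⟩ := P.finite_toSet.t2_separation
  have hUnion : HasLogOn G (⋃ p : P, (W p ∩ U p) \ P) := by
    refine hasLogOn_iUnion_of_pairwise_disjoint
      (fun p => ((hWo p p.2).inter (hU p).2).sdiff P.finite_toSet.isClosed)
      (fun p q hpq => ?_)
      fun p => (hWlog p p.2).mono fun z hz => ⟨hz.1.1, fun hzp => hz.2 (hzp ▸ p.2)⟩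
    exact (hUd p.2 q.2 (Subtype.coe_ne_coe.mpr hpq)).mono (fun z hz => hz.1.2) fun z hz => hz.1.2
  rw [← iUnion_sdiff] at hUnion
  obtain ⟨H, hH, hH0, hHG⟩ := exists_continuousOn_ne_zero_eqOn_compl P.finite_toSet.isClosed
    (isOpen_iUnion fun p : P => (hWo p p.2).inter (hU p).2)
    (fun p hp => mem_iUnion.mpr ⟨⟨p, hp⟩, hpW p hp, (hU p).1⟩) hG hG0 hUnion
  refine ((hasLogOn_of_convex hΩ hΩo hH hH0).mono hKΩ).congr fun z hz => (hHG fun hzO => ?_).symm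
  obtain ⟨p, hp⟩ := mem_iUnion.mp hzO
  exact hWK p p.2 hp.1 hz

theorem dense_setOf_regular_value {E : Type*} [NormedAddCommGroup E] [NormedSpace ℝ E]
    [FiniteDimensional ℝ E] {g : E → E} (hg : Differentiable ℝ g) :
    Dense {c | ∀ z, g z = c → (fderiv ℝ g z).det ≠ 0} := by
  borelize E
  have hnull : MeasureTheory.Measure.addHaar (g '' {z | (fderiv ℝ g z).det = 0}) = 0 :=
    MeasureTheory.addHaar_image_eq_zero_of_det_fderivWithin_eq_zero _
      (fun z _ => (hg z).hasFDerivAt.hasFDerivWithinAt) fun z hz => hz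
  refine (MeasureTheory.Measure.dense_of_ae
    (MeasureTheory.measure_eq_zero_iff_ae_notMem.mp hnull)).mono fun c hc z hz hdet => ?_
  exact hc ⟨z, hdet, hz⟩

theorem exists_approx_det_fderiv_ne_zero {K : Set ℂ} (hK : IsCompact K) {u : ℂ → ℂ}
    (hu : ContinuousOn u K) (hu0 : ∀ z ∈ K, u z ≠ 0) :
    ∃ F : ℂ → ℂ, Differentiable ℝ F ∧ (∀ z ∈ K, ‖F z - u z‖ < ‖u z‖) ∧
      ∀ z, F z = 0 → (fderiv ℝ F z).det ≠ 0 := by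
  obtain ⟨U, hU, hUu⟩ := exists_continuous_eqOn_of_continuousOn hu hK.isClosed
  obtain ⟨m, hm, hmu⟩ : ∃ m > 0, ∀ z ∈ K, m ≤ ‖u z‖ := by
    obtain rfl | hne := K.eq_empty_or_nonempty
    · exact ⟨1, one_pos, by simp⟩
    · obtain ⟨z, hz, hmin⟩ := hK.exists_isMinOn hne hu.norm
      exact ⟨‖u z‖, norm_pos_iff.mpr (hu0 z hz), fun w hw => hmin hw⟩
  obtain ⟨g, hg, hgU, -⟩ := hU.exists_contDiff_approx (E := ℂ) (F := ℂ) 1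
    (continuous_const (y := m / 2)) fun _ => half_pos hm
  have hgd : Differentiable ℝ g := hg.differentiable one_ne_zero
  obtain ⟨c, hreg, hc⟩ := (dense_setOf_regular_value hgd).exists_dist_lt 0 (half_pos hm)
  refine ⟨fun z => g z - c, hgd.sub_const c, fun z hz => ?_, fun z hz => ?_⟩
  · have happrox : ‖g z - u z‖ < m / 2 := by simpa only [hUu hz, dist_eq_norm] using hgU z
    rw [dist_zero_left] at hc
    calc ‖g z - c - u z‖ = ‖g z - u z - c‖ := by rw [sub_right_comm]
      _ ≤ ‖g z - u z‖ + ‖c‖ := norm_sub_le _ _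
      _ < ‖u z‖ := by linarith [hmu z hz]
  · rw [fderiv_sub_const]
    exact hreg z (sub_eq_zero.mp hz)

theorem finite_inter_setOf_eq_zero {K : Set ℂ} (hK : IsCompact K) {F : ℂ → ℂ}
    (hF : Continuous F) (hiso : ∀ z, F z = 0 → ∀ᶠ w in 𝓝[≠] z, F w ≠ 0) :
    (K ∩ {z | F z = 0}).Finite := by
  refine (hK.inter_right (isClosed_eq hF continuous_const)).finite
    (isDiscrete_iff_nhdsWithin.mpr fun z hz => le_antisymm ?_ (pure_le_nhdsWithin hz))
  rw [le_pure_iff]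
  filter_upwards [mem_nhdsWithin_of_mem_nhds (eventually_nhdsWithin_iff.mp (hiso z hz.2)),
    self_mem_nhdsWithin] with w hw hwK
  by_contra hne
  exact hw hne hwK.2

/-- Eilenberg's theorem. A smooth approximation of `u` has finitely many zeros near `K`, all of them
nondegenerate; each is removed by a factor `(z - p)⁻¹` or, if orientation is reversed, `z - p`. -/
theorem exists_hasLogOn_mul_prod_zpow_of_isCompact {K : Set ℂ} (hK : IsCompact K) {u : ℂ → ℂ}
    (hu : ContinuousOn u K) (hu0 : ∀ z ∈ K, u z ≠ 0) :
    ∃ (P : Finset ℂ) (ε : ℂ → ℤ), (∀ p ∈ P, p ∉ K) ∧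
      HasLogOn (fun z => u z * ∏ p ∈ P, (z - p) ^ ε p) K := by
  obtain ⟨F, hF, hFu, hdet⟩ := exists_approx_det_fderiv_ne_zero hK hu hu0
  have hF0 : ∀ z ∈ K, F z ≠ 0 := fun z hz hz0 => by
    simpa [hz0] using hFu z hz
  have hloc : ∀ z, F z = 0 →
      ∃ ε : ℤ, ∃ V ∈ 𝓝 z, HasLogOn (fun w => F w * (w - z) ^ ε) (V \ {z}) := fun z hz =>
    exists_hasLogOn_mul_zpow_of_hasFDerivAt hF.continuous (hF z).hasFDerivAt hz (hdet z hz)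
  obtain ⟨R, hKR⟩ := hK.isBounded.subset_ball 0
  have hfin := finite_inter_setOf_eq_zero (isCompact_closedBall (0 : ℂ) R) hF.continuous
    fun z hz => by
      obtain ⟨ε, V, hV, hlog⟩ := hloc z hz
      filter_upwards [inter_mem_nhdsWithin _ hV] with w hw
      exact left_ne_zero_of_mul (hlog.ne_zero ⟨hw.2, hw.1⟩)
  have hP : ∀ z ∈ hfin.toFinset, F z = 0 := fun z hz => (hfin.mem_toFinset.mp hz).2
  have hPK : ∀ z ∈ hfin.toFinset, z ∉ K := fun z hz hzK => hF0 z hzK (hP z hz)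
  obtain ⟨ε, hε⟩ := exists_hasLogOn_mul_prod_zpow (convex_ball 0 R) isOpen_ball hKR hK.isClosed
    hPK hF.continuous.continuousOn
    (fun z hz hz0 => hz.2 (hfin.mem_toFinset.mpr ⟨ball_subset_closedBall hz.1, hz0⟩))
    fun z hz => hloc z (hP z hz)
  have hFu_log := (HasLogOn.div_of_norm_sub_lt hF.continuous.continuousOn hu hFu).inv
  refine ⟨hfin.toFinset, ε, hPK, (hFu_log.mul hε).congr fun z hz => ?_⟩
  have hFz := hF0 z hz
  have huz := hu0 z hz
  field_simp

theorem hasLogOn_of_forall_hasLogOn_sub {K : Set ℂ} (hK : IsCompact K)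
    (hlog : ∀ p ∉ K, HasLogOn (fun z => z - p) K) {u : ℂ → ℂ} (hu : ContinuousOn u K)
    (hu0 : ∀ z ∈ K, u z ≠ 0) : HasLogOn u K := by
  obtain ⟨P, ε, hP, hl⟩ := exists_hasLogOn_mul_prod_zpow_of_isCompact hK hu hu0
  have hprod : HasLogOn (fun z => ∏ p ∈ P, (z - p) ^ ε p) K :=
    HasLogOn.finset_prod P fun p hp => (hlog p (hP p hp)).zpow _
  exact (hl.mul hprod.inv).congr fun z hz =>
    (mul_inv_cancel_right₀ (hprod.ne_zero hz) _).symm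

/-- Uniform local connectedness of a subset `K` of a metric space: any two sufficiently close
points `x`, `y` of `K` lie in a connected subset of `K` of prescribed smallness, which is encoded
by the connected component of `x` in `K ∩ ball x ε`. -/
def IsUniformlyLocallyConnected {E : Type*} [PseudoMetricSpace E] (K : Set E) : Prop :=
  ∀ ε > 0, ∃ δ > 0, ∀ x ∈ K, ∀ y ∈ K, dist x y < δ → y ∈ connectedComponentIn (K ∩ ball x ε) x

theorem not_hasLogOn_sub_sdiff {K O : Set ℂ} (hK : IsClosed K) (hO : IsOpen O)
    (hOb : Bornology.IsBounded O) (hKO : K ⊆ O) {c : ℂ} (hc : c ∈ K) :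
    ¬ HasLogOn (fun z => z - c) (O \ K) := by
  intro hlog
  obtain ⟨H, hH, hH0, hHO⟩ := exists_continuousOn_ne_zero_eqOn_compl (Ω := univ) hK hO hKO
    (G := fun z => z - c) (by fun_prop)
    (fun z hz => sub_ne_zero.mpr (ne_of_mem_of_not_mem hc hz.2).symm) hlog
  obtain ⟨R, hOR⟩ := hOb.subset_ball c
  have hR : 0 < R := pos_of_mem_ball (hOR (hKO hc))
  have hsphere : HasLogOn (fun z => (z - c) ^ (1 : ℤ)) (sphere c R) :=
    ((hasLogOn_of_convex convex_univ isOpen_univ hH hH0).mono (subset_univ _)).congr fun z hz => by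
      rw [zpow_one]
      exact (hHO fun hzO => (mem_ball.mp (hOR hzO)).ne hz).symm
  exact one_ne_zero (eq_zero_of_hasLogOn_zpow_sphere hR hsphere)

theorem eventually_eq_add_log_sub_log {K : Set ℂ} (hK : IsClosed K) (hconn : IsPreconnected K)
    {y₀ : ℂ} (hy₀ : y₀ ∈ K) {l : ℂ → ℂ → ℂ} (hl : ∀ z ∉ K, ContinuousOn (l z) K)
    (hl₀ : ∀ z ∉ K, l z y₀ = 0)
    (he : ∀ z ∉ K, ∀ y ∈ K, Complex.exp (l z y) = (z - y) / (z - y₀))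
    {z₀ : ℂ} (hz₀ : z₀ ∉ K) {y : ℂ} (hy : y ∈ K) :
    ∀ᶠ z in 𝓝 z₀, l z y = l z₀ y + Complex.log ((z - y) / (z₀ - y))
      - Complex.log ((z - y₀) / (z₀ - y₀)) := by
  obtain ⟨r, hr, hball⟩ := Metric.isOpen_iff.mp hK.isOpen_compl z₀ hz₀
  filter_upwards [ball_mem_nhds z₀ hr] with z hz
  have hzK : z ∉ K := hball hz
  have hne : ∀ {w : ℂ}, w ∉ K → ∀ x ∈ K, w - x ≠ 0 := fun hw x hx =>
    sub_ne_zero.mpr (ne_of_mem_of_not_mem hx hw).symm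
  have hslit : ∀ x ∈ K, (z - x) / (z₀ - x) ∈ Complex.slitPlane := fun x hx => by
    refine div_mem_slitPlane_of_norm_sub_lt ?_
    rw [sub_sub_sub_cancel_right, ← dist_eq_norm, ← dist_eq_norm, dist_comm z₀ x]
    exact (mem_ball.mp hz).trans_le (not_lt.mp fun h => hball h hx)
  have hlog : ∀ x ∈ K, Complex.exp (l z x) = Complex.exp (l z₀ x +
      Complex.log ((z - x) / (z₀ - x)) - Complex.log ((z - y₀) / (z₀ - y₀))) := fun x hx => by
    rw [he z hzK x hx, Complex.exp_sub, Complex.exp_add, he z₀ hz₀ x hx,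
      Complex.exp_log (Complex.slitPlane_ne_zero (hslit x hx)),
      Complex.exp_log (Complex.slitPlane_ne_zero (hslit y₀ hy₀))]
    have hz₀x := hne hz₀ x hx
    have hz₀y₀ := hne hz₀ y₀ hy₀
    have hzy₀ := hne hzK y₀ hy₀
    field_simp
  have hcont : ContinuousOn (fun x => l z₀ x + Complex.log ((z - x) / (z₀ - x)) -
      Complex.log ((z - y₀) / (z₀ - y₀))) K :=
    ((hl z₀ hz₀).add (ContinuousOn.clog
      (ContinuousOn.div (by fun_prop) (by fun_prop) (hne hz₀)) hslit)).sub continuousOn_const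
  have hdiff := sub_eq_sub_of_exp_eq hconn (hl z hzK) hcont hlog hy hy₀
  simp only [hl₀ z hzK, hl₀ z₀ hz₀] at hdiff
  linear_combination hdiff

theorem exists_log_div_sub_continuousOn {K : Set ℂ} (hK : IsClosed K) (hconn : IsPreconnected K)
    (hlog : ∀ p ∉ K, HasLogOn (fun z => z - p) K) {y₀ : ℂ} (hy₀ : y₀ ∈ K) :
    ∃ l : ℂ → ℂ → ℂ, (∀ z ∉ K, ContinuousOn (l z) K) ∧ (∀ y ∈ K, ContinuousOn (l · y) Kᶜ) ∧
      ∀ z ∉ K, ∀ y ∈ K, Complex.exp (l z y) = (z - y) / (z - y₀) := by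
  choose! m hm hme using hlog
  have he : ∀ z ∉ K, ∀ y ∈ K, Complex.exp (m z y) = y - z := hme
  have hlog_sub : ∀ z ∉ K, ContinuousOn (fun y => m z y - m z y₀) K := fun z hz =>
    (hm z hz).sub continuousOn_const
  have hexp : ∀ z ∉ K, ∀ y ∈ K, Complex.exp (m z y - m z y₀) = (z - y) / (z - y₀) :=
    fun z hz y hy => by
      rw [Complex.exp_sub, he z hz y hy, he z hz y₀ hy₀, ← neg_sub z y, ← neg_sub z y₀,
        neg_div_neg_eq]
  refine ⟨fun z y => m z y - m z y₀, hlog_sub, fun y hy z₀ hz₀ => ?_, hexp⟩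
  have hform := eventually_eq_add_log_sub_log hK hconn hy₀ hlog_sub (fun z _ => sub_self _)
    hexp hz₀ hy
  have hcont : ∀ x ∈ K, ContinuousAt (fun z => Complex.log ((z - x) / (z₀ - x))) z₀ :=
    fun x hx => ContinuousAt.clog (by fun_prop) <| by
      rw [div_self (sub_ne_zero.mpr (ne_of_mem_of_not_mem hx hz₀).symm)]
      exact Complex.one_mem_slitPlane
  exact (((continuousAt_const.add (hcont y hy)).sub (hcont y₀ hy₀)).congr
    (hform.mono fun z hz => hz.symm)).continuousWithinAt

/-- The logarithms of `z - y₀` near `K` are built from a displacement `y - f y` without zeros: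
for `y` near `z`, `z - y₀ = (z - f y) / (y - f y) * (y - f y) / ((z - f y) / (z - y₀))`. -/
theorem exists_local_log_sub {K : Set ℂ} (hK : IsCompact K) (hconn : IsPreconnected K)
    (hlog : ∀ p ∉ K, HasLogOn (fun z => z - p) K) {f : ℂ → ℂ} (hf : ContinuousOn f K)
    (hmaps : MapsTo f K K) (hfix : ∀ y ∈ K, f y ≠ y) {y₀ : ℂ} (hy₀ : y₀ ∈ K) :
    ∃ η > 0, ∃ G : ℂ → ℂ → ℂ,
      (∀ y ∈ K, ContinuousOn (G y) (ball y η \ K)) ∧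
      (∀ z ∉ K, ContinuousOn (fun y => G y z) (K ∩ ball z η)) ∧
      ∀ z ∉ K, ∀ y ∈ K, dist z y < η → Complex.exp (G y z) = z - y₀ := by
  have hdisp : ∀ y ∈ K, y - f y ≠ 0 := fun y hy => sub_ne_zero.mpr (hfix y hy).symm
  have hdispc : ContinuousOn (fun y => y - f y) K := continuousOn_id.sub hf
  obtain ⟨m, hm, hme⟩ := hasLogOn_of_forall_hasLogOn_sub hK hlog hdispc hdisp
  obtain ⟨l, hly, hlz, hle⟩ := exists_log_div_sub_continuousOn hK.isClosed hconn hlog hy₀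
  obtain ⟨x, hx, hmin⟩ := hK.exists_isMinOn ⟨y₀, hy₀⟩ hdispc.norm
  have hslit : ∀ z, ∀ y ∈ K, dist z y < ‖x - f x‖ →
      (z - f y) / (y - f y) ∈ Complex.slitPlane :=
    fun z y hy hzy => div_mem_slitPlane_of_norm_sub_lt <| by
      rw [sub_sub_sub_cancel_right, ← dist_eq_norm]
      exact hzy.trans_le (hmin hy)
  refine ⟨‖x - f x‖, norm_pos_iff.mpr (hdisp x hx),
    fun y z => Complex.log ((z - f y) / (y - f y)) + m y - l z (f y), fun y hy => ?_,
    fun z hz => ?_, fun z hz y hy hzy => ?_⟩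
  · exact ((ContinuousOn.clog (by fun_prop) fun z hz => hslit z y hy hz.1).add
      continuousOn_const).sub ((hlz (f y) (hmaps hy)).mono fun z hz => hz.2)
  · exact ((ContinuousOn.clog (((continuousOn_const.sub hf).div hdispc hdisp).mono
      inter_subset_left) fun y hy => hslit z y hy.1 (mem_ball'.mp hy.2)).add
      (hm.mono inter_subset_left)).sub (((hly z hz).comp hf hmaps).mono inter_subset_left)
  · have hzf : z - f y ≠ 0 := sub_ne_zero.mpr (ne_of_mem_of_not_mem (hmaps hy) hz).symm
    have hyf := hdisp y hy
    rw [Complex.exp_sub, Complex.exp_add, hle z hz _ (hmaps hy), hme y hy,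
      Complex.exp_log (Complex.slitPlane_ne_zero (hslit z y hy hzy))]
    field_simp

theorem IsUniformlyLocallyConnected.hasLogOn_thickening_sdiff {E : Type*} [PseudoMetricSpace E]
    {K : Set E} (hulc : IsUniformlyLocallyConnected K) (hK : IsClosed K) {u : E → ℂ} {η : ℝ}
    (hη : 0 < η) {G : E → E → ℂ} (hGz : ∀ y ∈ K, ContinuousOn (G y) (ball y η \ K))
    (hGy : ∀ z ∉ K, ContinuousOn (fun y => G y z) (K ∩ ball z η))
    (hexp : ∀ z ∉ K, ∀ y ∈ K, dist z y < η → Complex.exp (G y z) = u z) :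
    ∃ δ > 0, HasLogOn u (thickening δ K \ K) := by
  obtain ⟨δ, hδ, hC⟩ := hulc (η / 2) (half_pos hη)
  refine ⟨min (δ / 2) (η / 2), lt_min (half_pos hδ) (half_pos hη), ?_⟩
  have hU : thickening (min (δ / 2) (η / 2)) K \ K =
      ⋃ y : K, ball (y : E) (min (δ / 2) (η / 2)) \ K := by
    rw [thickening_eq_biUnion_ball, biUnion_eq_iUnion, iUnion_sdiff]
  have hclose : ∀ {z y : E}, z ∈ ball y (min (δ / 2) (η / 2)) →
      dist z y < δ / 2 ∧ dist z y < η / 2 := fun hz => lt_min_iff.mp hz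
  rw [hU]
  refine hasLogOn_iUnion_of_isOpen (l := fun y => G y) (fun y => isOpen_ball.sdiff hK)
    (fun y => (hGz y y.2).mono fun z hz => ⟨?_, hz.2⟩) (fun y z hz => ?_) ?_
  · exact (hclose hz.1).2.trans (half_lt_self hη)
  · exact hexp z hz.2 y y.2 ((hclose hz.1).2.trans (half_lt_self hη))
  rintro ⟨y, hy⟩ ⟨y', hy'⟩ z ⟨⟨hzy, hz⟩, hzy', -⟩
  have hyy' : dist y y' < δ :=
    (dist_triangle_left y y' z).trans_lt (by linarith [hclose hzy, hclose hzy'])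
  have hsub : connectedComponentIn (K ∩ ball y (η / 2)) y ⊆ K ∩ ball z η :=
    (connectedComponentIn_subset _ _).trans <| inter_subset_inter_right K <|
      ball_subset_ball' (by linarith [hclose hzy, dist_comm z y])
  have hconst := sub_eq_sub_of_exp_eq isPreconnected_connectedComponentIn ((hGy z hz).mono hsub)
    (m := fun _ => G y z) continuousOn_const
    (fun x hx => by
      rw [hexp z hz x (hsub hx).1 (mem_ball'.mp (hsub hx).2),
        hexp z hz y hy ((hclose hzy).2.trans (half_lt_self hη))])
    (mem_connectedComponentIn ⟨hy, mem_ball_self (half_pos hη)⟩) (hC y hy y' hy' hyy')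
  simpa [sub_eq_zero, eq_comm] using hconst

theorem exists_eq_of_forall_hasLogOn_sub {K : Set ℂ} (hK : IsCompact K) (hconn : IsConnected K)
    (hulc : IsUniformlyLocallyConnected K) (hlog : ∀ p ∉ K, HasLogOn (fun z => z - p) K)
    {f : ℂ → ℂ} (hf : ContinuousOn f K) (hmaps : MapsTo f K K) : ∃ x ∈ K, f x = x := by
  by_contra! hfix
  obtain ⟨c, hc⟩ := hconn.nonempty
  obtain ⟨η, hη, G, hGz, hGy, hexp⟩ :=
    exists_local_log_sub hK hconn.isPreconnected hlog hf hmaps hfix hc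
  obtain ⟨δ, hδ, hlogδ⟩ := hulc.hasLogOn_thickening_sdiff hK.isClosed hη hGz hGy hexp
  exact not_hasLogOn_sub_sdiff hK.isClosed isOpen_thickening hK.isBounded.thickening
    (self_subset_thickening hδ K) hc hlogδ

theorem isUniformlyLocallyConnected_of_locallyConnectedSpace {E : Type*} [PseudoMetricSpace E]
    {X : Set E} (hX : IsCompact X) [LocallyConnectedSpace X] : IsUniformlyLocallyConnected X := by
  intro ε hε
  have : CompactSpace X := isCompact_iff_compactSpace.mp hX
  have hbasis : ∀ x : X, ∃ V : Set X, (IsOpen V ∧ x ∈ V ∧ IsConnected V) ∧ V ⊆ ball x (ε / 2) :=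
    fun x => (LocallyConnectedSpace.open_connected_basis x).mem_iff.mp
      (ball_mem_nhds x (half_pos hε))
  choose V hV hVball using hbasis
  obtain ⟨δ, hδ, hlebesgue⟩ := lebesgue_number_lemma_of_metric (isCompact_univ (X := X))
    (fun x => (hV x).1) (fun x _ => mem_iUnion.mpr ⟨x, (hV x).2.1⟩)
  refine ⟨δ, hδ, fun x hx y hy hxy => ?_⟩
  obtain ⟨i, hi⟩ := hlebesgue ⟨x, hx⟩ (mem_univ _)
  have hxi : (⟨x, hx⟩ : X) ∈ V i := hi (mem_ball_self hδ)
  have hyi : (⟨y, hy⟩ : X) ∈ V i := hi (mem_ball'.mpr hxy)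
  refine ((hV i).2.2.isPreconnected.image _ continuous_subtype_val.continuousOn
    ).subset_connectedComponentIn ⟨_, hxi, rfl⟩ ?_ ⟨_, hyi, rfl⟩
  rintro _ ⟨z, hz, rfl⟩
  have hzx : dist z ⟨x, hx⟩ < ε / 2 + ε / 2 :=
    (dist_triangle_right z ⟨x, hx⟩ i).trans_lt (add_lt_add (hVball i hz) (hVball i hxi))
  rw [add_halves] at hzx
  exact ⟨z.2, hzx⟩

/-- Property S of Sierpiński: `S` is a finite union of connected sets of prescribed smallness. -/
def HasPropertyS {E : Type*} [PseudoMetricSpace E] (S : Set E) : Prop :=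
  ∀ ε > 0, ∃ t : Set (Set E), t.Finite ∧ ⋃₀ t = S ∧
    ∀ A ∈ t, IsPreconnected A ∧ ∃ p, A ⊆ closedBall p ε

theorem exists_pos_forall_dist_lt_inter_nonempty {E : Type*} [PseudoMetricSpace E]
    {t : Set (Set E)} (ht : t.Finite) (hcomp : ∀ A ∈ t, IsCompact A)
    (hclosed : ∀ A ∈ t, IsClosed A) :
    ∃ δ > 0, ∀ A ∈ t, ∀ B ∈ t, ∀ x ∈ A, ∀ y ∈ B, dist x y < δ → (A ∩ B).Nonempty := by
  have hpair : ∀ᶠ δ : ℝ in 𝓝[>] 0, ∀ A ∈ t, ∀ B ∈ t, ∀ x ∈ A, ∀ y ∈ B, dist x y < δ →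
      (A ∩ B).Nonempty := by
    refine (eventually_all_finite ht).mpr fun A hA => (eventually_all_finite ht).mpr fun B hB => ?_
    by_cases hAB : (A ∩ B).Nonempty
    · exact Eventually.of_forall fun _ _ _ _ _ _ => hAB
    · rw [not_nonempty_iff_eq_empty, ← disjoint_iff_inter_eq_empty] at hAB
      obtain ⟨r, hr, hsep⟩ := exists_pos_forall_lt_edist (hcomp A hA) (hclosed B hB) hAB
      filter_upwards [Ioo_mem_nhdsGT (NNReal.coe_pos.mpr hr)] with δ hδ x hx y hy hxy
      have hrxy := hsep x hx y hy
      rw [edist_nndist, ENNReal.coe_lt_coe, ← NNReal.coe_lt_coe, coe_nndist] at hrxy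
      exact absurd (hxy.trans hδ.2) hrxy.not_gt
  obtain ⟨δ, hδ, hδpos⟩ := (hpair.and self_mem_nhdsWithin).exists
  exact ⟨δ, hδpos, hδ⟩

theorem HasPropertyS.isUniformlyLocallyConnected_closure {E : Type*} [PseudoMetricSpace E]
    {S : Set E} (hS : HasPropertyS S) (hcomp : IsCompact (closure S)) :
    IsUniformlyLocallyConnected (closure S) := by
  intro ε hε
  obtain ⟨t, ht, htS, hA⟩ := hS (ε / 5) (by positivity)
  have hcl : closure S = ⋃ A ∈ t, closure A := by
    rw [← htS, sUnion_eq_biUnion, ht.closure_biUnion]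
  have hsub : ∀ A ∈ t, closure A ⊆ closure S := fun A hAt =>
    closure_mono (htS ▸ subset_sUnion_of_mem hAt)
  obtain ⟨δ, hδ, hmeet⟩ := exists_pos_forall_dist_lt_inter_nonempty (ht.image closure)
    (forall_mem_image.mpr fun A hAt => hcomp.of_isClosed_subset isClosed_closure (hsub A hAt))
    (forall_mem_image.mpr fun A _ => isClosed_closure)
  refine ⟨δ, hδ, fun x hx y hy hxy => ?_⟩
  rw [hcl] at hx hy
  obtain ⟨A, hAt, hxA⟩ := mem_iUnion₂.mp hx
  obtain ⟨B, hBt, hyB⟩ := mem_iUnion₂.mp hy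
  obtain ⟨w, hwA, hwB⟩ :=
    hmeet _ (mem_image_of_mem _ hAt) _ (mem_image_of_mem _ hBt) x hxA y hyB hxy
  obtain ⟨hAc, p, hAp⟩ := hA A hAt
  obtain ⟨hBc, q, hBq⟩ := hA B hBt
  have hAp : closure A ⊆ closedBall p (ε / 5) := closure_minimal hAp isClosed_closedBall
  have hBq : closure B ⊆ closedBall q (ε / 5) := closure_minimal hBq isClosed_closedBall
  have hdistA : ∀ z ∈ closure A, dist z x ≤ 2 * (ε / 5) := fun z hz => by
    linarith [dist_triangle_right z x p, mem_closedBall.mp (hAp hz), mem_closedBall.mp (hAp hxA)]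
  have hdistB : ∀ z ∈ closure B, dist z w ≤ 2 * (ε / 5) := fun z hz => by
    linarith [dist_triangle_right z w q, mem_closedBall.mp (hBq hz), mem_closedBall.mp (hBq hwB)]
  refine (hAc.closure.union w hwA hwB hBc.closure).subset_connectedComponentIn (.inl hxA)
    (subset_inter (union_subset (hsub A hAt) (hsub B hBt)) ?_) (.inr hyB)
  rintro z (hz | hz) <;> rw [mem_ball]
  · linarith [hdistA z hz]
  · linarith [dist_triangle z w x, hdistA w hwA, hdistB z hz]

/-- `ShrinkingReach X ρ x y` says that `y` can be reached from `x` by a finite chain of steps, each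
inside a connected subset of `X`, of sizes at most `ρ, ρ / 2, ρ / 4, …`. The points reached from `x`
form a small connected neighbourhood of `x` in `X` whose closure is again uniformly locally
connected. -/
inductive ShrinkingReach {E : Type*} [PseudoMetricSpace E] (X : Set E) : ℝ → E → E → Prop
  | refl (ρ : ℝ) (x : E) : ShrinkingReach X ρ x x
  | step {ρ : ℝ} {x y z : E} (hxy : y ∈ connectedComponentIn (X ∩ ball x ρ) x)
      (hyz : ShrinkingReach X (ρ / 2) y z) : ShrinkingReach X ρ x z

section ShrinkingReach

variable {E : Type*} [PseudoMetricSpace E] {X : Set E} {ρ : ℝ} {x y z : E}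

theorem ShrinkingReach.of_mem (h : y ∈ connectedComponentIn (X ∩ ball x ρ) x) :
    ShrinkingReach X ρ x y :=
  .step h (.refl _ _)

theorem ShrinkingReach.mem (h : ShrinkingReach X ρ x y) (hx : x ∈ X) : y ∈ X := by
  induction h with
  | refl => exact hx
  | step hxy _ ih => exact ih (connectedComponentIn_subset _ _ hxy).1

theorem ShrinkingReach.dist_lt (h : ShrinkingReach X ρ x y) (hρ : 0 < ρ) :
    dist y x < 2 * ρ := by
  induction h with
  | refl ρ x => simpa using hρ
  | @step ρ x y z hxy _ ih =>
    have hyx : dist y x < ρ := (connectedComponentIn_subset _ _ hxy).2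
    linarith [ih (half_pos hρ), dist_triangle z y x]

theorem ShrinkingReach.exists_isPreconnected (h : ShrinkingReach X ρ x y) :
    ∃ C ⊆ {z | ShrinkingReach X ρ x z}, IsPreconnected C ∧ x ∈ C ∧ y ∈ C := by
  induction h with
  | refl ρ x =>
    exact ⟨{x}, singleton_subset_iff.mpr (.refl ρ x), isPreconnected_singleton, rfl, rfl⟩
  | @step ρ x y z hxy _ ih =>
    obtain ⟨C, hC, hCc, hyC, hzC⟩ := ih
    have hx : x ∈ connectedComponentIn (X ∩ ball x ρ) x :=
      mem_connectedComponentIn (connectedComponentIn_nonempty_iff.mp ⟨y, hxy⟩)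
    exact ⟨_ ∪ C, union_subset (fun w hw => .of_mem hw) fun w hw => ShrinkingReach.step hxy (hC hw),
      isPreconnected_connectedComponentIn.union y hxy hyC hCc, .inl hx, .inr hzC⟩

theorem isPreconnected_setOf_shrinkingReach : IsPreconnected {z | ShrinkingReach X ρ x z} :=
  isPreconnected_of_forall x fun _ hz =>
    let ⟨C, hC, hCc, hxC, hzC⟩ := ShrinkingReach.exists_isPreconnected hz
    ⟨C, hC, hxC, hzC, hCc⟩

theorem ShrinkingReach.exists_forall_dist_lt (h : ShrinkingReach X ρ x y)
    (hX : IsUniformlyLocallyConnected X) (hx : x ∈ X) (hρ : 0 < ρ) :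
    ∃ δ > 0, ∀ z ∈ X, dist y z < δ → ShrinkingReach X ρ x z := by
  induction h with
  | refl ρ x =>
    obtain ⟨δ, hδ, hconn⟩ := hX ρ hρ
    exact ⟨δ, hδ, fun z hz hxz => .of_mem (hconn x hx z hz hxz)⟩
  | step hxy _ ih =>
    obtain ⟨δ, hδ, hreach⟩ := ih (connectedComponentIn_subset _ _ hxy).1 (half_pos hρ)
    exact ⟨δ, hδ, fun z hz hyz => .step hxy (hreach z hz hyz)⟩

theorem ShrinkingReach.exists_between (n : ℕ) (h : ShrinkingReach X ρ x z) (hx : x ∈ X)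
    (hρ : 0 < ρ) : ∃ y, ShrinkingReach X (ρ / 2 ^ n) y z ∧
      {w | ShrinkingReach X (ρ / 2 ^ n) y w} ⊆ {w | ShrinkingReach X ρ x w} := by
  induction n generalizing ρ x with
  | zero => exact ⟨x, by simpa using h, by simp⟩
  | succ n ih =>
    have hpow : ρ / 2 ^ (n + 1) = ρ / 2 / 2 ^ n := by rw [pow_succ', div_div]
    rw [hpow]
    obtain ⟨x', hx', hz⟩ : ∃ x' ∈ connectedComponentIn (X ∩ ball x ρ) x,
        ShrinkingReach X (ρ / 2) x' z := by
      cases h with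
      | refl => exact ⟨_, mem_connectedComponentIn ⟨hx, mem_ball_self hρ⟩, .refl _ _⟩
      | step hxy hyz => exact ⟨_, hxy, hyz⟩
    obtain ⟨y, hyz, hy⟩ := ih hz (connectedComponentIn_subset _ _ hx').1 (half_pos hρ)
    exact ⟨y, hyz, hy.trans fun w hw => ShrinkingReach.step hx' hw⟩

theorem hasPropertyS_setOf_shrinkingReach (hX : IsUniformlyLocallyConnected X)
    (hcomp : IsCompact X) (hx : x ∈ X) (hρ : 0 < ρ) :
    HasPropertyS {z | ShrinkingReach X ρ x z} := by
  intro ε hε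
  obtain ⟨n, hn⟩ : ∃ n : ℕ, 3 * (ρ / 2 ^ n) < ε := by
    obtain ⟨n, hn⟩ := exists_pow_lt_of_lt_one (div_pos hε (mul_pos three_pos hρ))
      (one_half_lt_one (α := ℝ))
    refine ⟨n, ?_⟩
    rw [lt_div_iff₀ (by positivity), one_div_pow] at hn
    linarith [show 3 * (ρ / 2 ^ n) = 1 / 2 ^ n * (3 * ρ) by ring]
  set s := ρ / 2 ^ n
  have hs : 0 < s := by positivity
  set W := {z | ShrinkingReach X ρ x z}
  set T := {y | {w | ShrinkingReach X s y w} ⊆ W}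
  have hTX : T ⊆ X := fun y hy => ShrinkingReach.mem (hy (.refl s y)) hx
  obtain ⟨δ, hδ, hconn⟩ := hX s hs
  obtain ⟨Q, hQT, hQ, hcover⟩ :=
    finite_approx_of_totallyBounded (hcomp.totallyBounded.subset hTX) δ hδ
  let step : E → Set E := fun p => connectedComponentIn (X ∩ ball p s) p
  let A : E → Set E := fun p => ⋃ y ∈ T ∩ step p, step p ∪ {z | ShrinkingReach X s y z}
  have hstep : ∀ p, ∀ y ∈ step p, dist y p < s := fun p y hy =>
    (connectedComponentIn_subset _ _ hy).2
  refine ⟨A '' Q, hQ.image A, ?_, forall_mem_image.mpr fun p hp => ⟨?_, p, ?_⟩⟩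
  · rw [sUnion_image]
    refine (iUnion₂_subset fun p hp => iUnion₂_subset fun y hy =>
      union_subset (fun z hz => hQT hp (.of_mem hz)) hy.1).antisymm fun z hz => ?_
    obtain ⟨y, hyz, hyT⟩ := ShrinkingReach.exists_between n hz hx hρ
    obtain ⟨p, hp, hyp⟩ := mem_iUnion₂.mp (hcover hyT)
    exact mem_iUnion₂.mpr ⟨p, hp, mem_iUnion₂.mpr ⟨y,
      ⟨hyT, hconn p (hTX (hQT hp)) y (hTX hyT) (mem_ball'.mp hyp)⟩, .inr hyz⟩⟩
  · have hpp : p ∈ step p := mem_connectedComponentIn ⟨hTX (hQT hp), mem_ball_self hs⟩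
    simp only [A, biUnion_eq_iUnion]
    exact isPreconnected_iUnion ⟨p, mem_iInter.mpr fun _ => .inl hpp⟩ fun y =>
      isPreconnected_connectedComponentIn.union y.1 y.2.2 (.refl s _)
        isPreconnected_setOf_shrinkingReach
  · refine iUnion₂_subset fun y hy => union_subset (fun z hz => ?_) fun z hz => ?_ <;>
      rw [mem_closedBall]
    · linarith [hstep p z hz]
    · linarith [hstep p y hy.2, ShrinkingReach.dist_lt hz hs, dist_triangle z y p]

end ShrinkingReach

theorem IsUniformlyLocallyConnected.exists_isOpen_inter_subset_ball {E : Type*}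
    [PseudoMetricSpace E] {X : Set E} (hX : IsUniformlyLocallyConnected X) (hcomp : IsCompact X)
    {x : E} (hx : x ∈ X) {ε : ℝ} (hε : 0 < ε) :
    ∃ U, IsOpen U ∧ x ∈ U ∧ IsPreconnected (X ∩ U) ∧ X ∩ U ⊆ ball x ε ∧
      IsUniformlyLocallyConnected (closure (X ∩ U)) := by
  have hε' : 0 < ε / 2 := half_pos hε
  set W := {z | ShrinkingReach X (ε / 2) x z}
  have hWX : W ⊆ X := fun z hz => ShrinkingReach.mem hz hx
  have hopen : ∀ y ∈ W, ∃ δ > 0, ∀ z ∈ X, dist y z < δ → z ∈ W := fun y hy =>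
    ShrinkingReach.exists_forall_dist_lt hy hX hx hε'
  choose! δ hδ hδW using hopen
  have hxW : x ∈ W := .refl _ x
  have hXU : X ∩ ⋃ y ∈ W, ball y (δ y) = W := by
    refine Subset.antisymm (fun z ⟨hzX, hz⟩ => ?_) fun z hz =>
      ⟨hWX hz, mem_biUnion hz (mem_ball_self (hδ z hz))⟩
    obtain ⟨y, hy, hzy⟩ := mem_iUnion₂.mp hz
    exact hδW y hy z hzX (mem_ball'.mp hzy)
  refine ⟨⋃ y ∈ W, ball y (δ y), isOpen_biUnion fun y _ => isOpen_ball,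
    mem_biUnion hxW (mem_ball_self (hδ x hxW)), ?_⟩
  rw [hXU]
  refine ⟨isPreconnected_setOf_shrinkingReach, fun z hz => ?_,
    (hasPropertyS_setOf_shrinkingReach hX hcomp hx hε').isUniformlyLocallyConnected_closure
      (hcomp.closure_of_subset hWX)⟩
  rw [mem_ball]
  linarith [ShrinkingReach.dist_lt hz hε']

/-- The plane set `K` together with the bounded components of its complement. For compact `K`, a
point `p ∉ K` lies in the unbounded component exactly when `z - p` has a continuous logarithm on
`K`, and for `p ∈ K` there is none because `z - p` vanishes at `p`. -/
def filledHull (K : Set ℂ) : Set ℂ :=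
  {p | ¬ HasLogOn (fun z => z - p) K}

section filledHull

variable {K : Set ℂ}

theorem subset_filledHull : K ⊆ filledHull K := fun p hp h => h.ne_zero hp (sub_self p)

theorem hasLogOn_sub_of_notMem_filledHull {p : ℂ} (hp : p ∉ filledHull K) :
    HasLogOn (fun z => z - p) K :=
  not_not.mp hp

theorem isOpen_filledHull_sdiff (hK : IsClosed K) : IsOpen (filledHull K \ K) := by
  have h := isOpen_setOf_not_hasLogOn_mul_sub hK fun _ => 1
  simp only [one_mul] at h
  exact (Set.ext fun p => and_comm : filledHull K \ K = _) ▸ h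

theorem isClosed_filledHull (hK : IsClosed K) : IsClosed (filledHull K) := by
  have h := isOpen_setOf_hasLogOn_mul_sub hK fun _ => 1
  simp only [one_mul] at h
  refine isOpen_compl_iff.mp ((Set.ext fun p => ?_ : (filledHull K)ᶜ = _) ▸ h)
  exact ⟨fun hp => ⟨fun hpK => hp (subset_filledHull hpK), not_not.mp hp⟩,
    fun hp => not_not.mpr hp.2⟩

theorem filledHull_subset_ball {c : ℂ} {R : ℝ} (h : K ⊆ ball c R) : filledHull K ⊆ ball c R :=
  fun _ hp => not_imp_comm.mp (hasLogOn_sub_of_subset_ball h) hp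

theorem isCompact_filledHull (hK : IsCompact K) : IsCompact (filledHull K) := by
  obtain ⟨R, hR⟩ := hK.isBounded.subset_ball 0
  exact isCompact_of_isClosed_isBounded (isClosed_filledHull hK.isClosed)
    (isBounded_ball.subset (filledHull_subset_ball hR))

theorem subset_filledHull_of_isPreconnected (hK : IsClosed K) {S : Set ℂ} (hS : IsPreconnected S)
    (hSK : Disjoint S K) {p : ℂ} (hpS : p ∈ S) (hp : p ∈ filledHull K) : S ⊆ filledHull K := by
  refine (hS.subset_left_of_subset_union (isOpen_filledHull_sdiff hK)
    (isClosed_filledHull hK).isOpen_compl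
    (disjoint_compl_right.mono_left sdiff_subset) (fun x hx => ?_)
    ⟨p, hpS, hp, hSK.notMem_of_mem_left hpS⟩).trans sdiff_subset
  exact (em (x ∈ filledHull K)).imp_left fun h => ⟨h, hSK.notMem_of_mem_left hx⟩

theorem exists_mem_isPreconnected_subset_segment (hK : IsClosed K) {p q : ℂ}
    (hp : p ∈ filledHull K) (hpq : (segment ℝ p q ∩ K).Nonempty) :
    ∃ a ∈ K, ∃ C ⊆ filledHull K ∩ segment ℝ p q, IsPreconnected C ∧ p ∈ C ∧ a ∈ C := by
  set γ : ℝ → ℂ := ⇑(AffineMap.lineMap p q : ℝ →ᵃ[ℝ] ℂ)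
  have hγ : Continuous γ := AffineMap.lineMap_continuous
  have hγ0 : γ 0 = p := AffineMap.lineMap_apply_zero p q
  rw [segment_eq_image_lineMap] at hpq ⊢
  obtain ⟨_, ⟨t₁, ht₁, rfl⟩, ht₁K⟩ := hpq
  obtain ⟨t₀, ⟨ht₀, ht₀K⟩, hmin⟩ := (isCompact_Icc.inter_right (hK.preimage hγ)).exists_isLeast
    (⟨t₁, ht₁, ht₁K⟩ : (Icc 0 1 ∩ γ ⁻¹' K).Nonempty)
  have hbefore : γ '' Ico 0 t₀ ⊆ filledHull K := by
    rcases ht₀.1.eq_or_lt with rfl | hpos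
    · simp
    refine subset_filledHull_of_isPreconnected hK (isPreconnected_Ico.image _ hγ.continuousOn) ?_
      ⟨0, ⟨le_rfl, hpos⟩, hγ0⟩ hp
    rw [Set.disjoint_left, forall_mem_image]
    exact fun t ht htK => ht.2.not_ge (hmin ⟨⟨ht.1, ht.2.le.trans ht₀.2⟩, htK⟩)
  refine ⟨γ t₀, ht₀K, γ '' Icc 0 t₀, subset_inter ?_ (image_mono (Icc_subset_Icc_right ht₀.2)),
    isPreconnected_Icc.image _ hγ.continuousOn, ⟨0, ⟨le_rfl, ht₀.1⟩, hγ0⟩,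
    ⟨t₀, ⟨ht₀.1, le_rfl⟩, rfl⟩⟩
  rw [← Ico_insert_right ht₀.1, image_insert_eq]
  exact insert_subset (subset_filledHull ht₀K) hbefore

theorem isConnected_filledHull (hK : IsClosed K) (hconn : IsConnected K) :
    IsConnected (filledHull K) := by
  obtain ⟨q, hq⟩ := hconn.nonempty
  refine ⟨⟨q, subset_filledHull hq⟩, isPreconnected_of_forall q fun p hp => ?_⟩
  obtain ⟨a, ha, C, hC, hCc, hpC, haC⟩ :=
    exists_mem_isPreconnected_subset_segment hK hp ⟨q, right_mem_segment ℝ p q, hq⟩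
  exact ⟨C ∪ K, union_subset (hC.trans inter_subset_left) subset_filledHull, .inr hq, .inl hpC,
    hCc.union a haC ha hconn.isPreconnected⟩

theorem isUniformlyLocallyConnected_filledHull (h : IsUniformlyLocallyConnected K)
    (hK : IsClosed K) : IsUniformlyLocallyConnected (filledHull K) := by
  intro ε hε
  obtain ⟨δ, hδ, hconn⟩ := h (ε / 2) (half_pos hε)
  refine ⟨min (δ / 2) (ε / 2), lt_min (half_pos hδ) (half_pos hε), fun p hp q hq hpq => ?_⟩
  obtain ⟨hpqδ, hpqε⟩ := lt_min_iff.mp hpq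
  have hseg : ∀ z ∈ segment ℝ p q, dist z p ≤ dist p q := fun z hz =>
    mem_closedBall.mp (segment_subset_closedBall_left p q hz)
  have hsegball : segment ℝ p q ⊆ ball p ε := fun z hz =>
    (hseg z hz).trans_lt (hpqε.trans (half_lt_self hε))
  by_cases hpqK : (segment ℝ p q ∩ K).Nonempty
  · obtain ⟨a, ha, C₁, hC₁, hC₁c, hpC₁, haC₁⟩ :=
      exists_mem_isPreconnected_subset_segment hK hp hpqK
    obtain ⟨b, hb, C₂, hC₂, hC₂c, hqC₂, hbC₂⟩ :=
      exists_mem_isPreconnected_subset_segment hK hq (segment_symm ℝ p q ▸ hpqK)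
    rw [segment_symm] at hC₂
    have hab : dist a b < δ := by
      linarith [dist_triangle_right a b p, hseg a (hC₁ haC₁).2, hseg b (hC₂ hbC₂).2]
    have haK : a ∈ K ∩ ball a (ε / 2) := ⟨ha, mem_ball_self (half_pos hε)⟩
    refine ((hC₁c.union a haC₁ (mem_connectedComponentIn haK)
      isPreconnected_connectedComponentIn).union b (.inr (hconn a ha b hb hab)) hbC₂
      hC₂c).subset_connectedComponentIn (.inl (.inl hpC₁)) ?_ (.inr hqC₂)
    refine union_subset (union_subset (hC₁.trans (inter_subset_inter_right _ hsegball)) ?_)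
      (hC₂.trans (inter_subset_inter_right _ hsegball))
    refine (connectedComponentIn_subset _ _).trans (inter_subset_inter subset_filledHull
      (ball_subset_ball' ?_))
    linarith [hseg a (hC₁ haC₁).2]
  · have hpre := (convex_segment (𝕜 := ℝ) p q).isPreconnected
    have hdisj : Disjoint (segment ℝ p q) K :=
      disjoint_iff_inter_eq_empty.mpr (not_nonempty_iff_eq_empty.mp hpqK)
    have hpseg := left_mem_segment ℝ p q
    exact hpre.subset_connectedComponentIn hpseg
      (subset_inter (subset_filledHull_of_isPreconnected hK hpre hdisj hpseg hp) hsegball)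
      (right_mem_segment ℝ p q)

/-- Outside `K`, the factor `(z - q) * exp (-l z)`, where `l` is a logarithm of `z - q` on `K`, may
be continued by `1` beyond the hull, so it has a logarithm on the whole plane. -/
theorem hasLogOn_sub_filledHull (hK : IsClosed K) {q : ℂ} (hq : q ∉ filledHull K) :
    HasLogOn (fun z => z - q) (filledHull K) := by
  classical
  obtain ⟨l, hl, hexp⟩ := (hasLogOn_sub_of_notMem_filledHull hq).exists_continuous hK
  set w : ℂ → ℂ := fun z => if z ∈ filledHull K then (z - q) * Complex.exp (-l z) else 1
  have hfrontier : frontier (filledHull K) ⊆ K := fun z hz => by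
    by_contra hzK
    exact hz.2 (mem_interior.mpr ⟨_, sdiff_subset, isOpen_filledHull_sdiff hK,
      (isClosed_filledHull hK).frontier_subset hz, hzK⟩)
  have hw : Continuous w := Continuous.if (fun z hz => by
    rw [← show _ = z - q from hexp z (hfrontier hz), ← Complex.exp_add, add_neg_cancel,
      Complex.exp_zero]) (by fun_prop) continuous_const
  have hw0 : ∀ z, w z ≠ 0 := fun z => by
    by_cases hz : z ∈ filledHull K
    · have hzq : z - q ≠ 0 := sub_ne_zero.mpr (ne_of_mem_of_not_mem hz hq)
      rw [show w z = _ from if_pos hz]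
      exact mul_ne_zero hzq (Complex.exp_ne_zero _)
    · rw [show w z = _ from if_neg hz]
      exact one_ne_zero
  obtain ⟨m, hm, hme⟩ := exists_continuous_log hw hw0
  refine ⟨fun z => m z + l z, (hm.add hl).continuousOn, fun z hz => ?_⟩
  rw [Complex.exp_add, hme, show w z = _ from if_pos hz, mul_assoc, ← Complex.exp_add,
    neg_add_cancel, Complex.exp_zero, mul_one]

end filledHull

theorem path_trans_apply_mem {E : Type*} [TopologicalSpace E] {x y z : E} {γ : Path x y}
    {γ' : Path y z} {B : Set E} (h : ∀ t, γ t ∈ B) (h' : ∀ t, γ' t ∈ B) (t : unitInterval) :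
    γ.trans γ' t ∈ B := by
  rw [Path.trans_apply]
  split_ifs
  exacts [h _, h' _]

section ChainPath

variable {E : Type*} [NormedAddCommGroup E] [NormedSpace ℝ E] {S : Set E} {r s : ℝ} {x y : E}

/-- A path made of finitely many straight segments, the end points of each of which lie in a
connected subset of `S` of size `s`. A path in a uniformly locally connected set is built as a
limit of such paths, each refining the previous one segment by segment. -/
inductive IsChainPath (S : Set E) (s : ℝ) : ∀ {x y : E}, Path x y → Prop
  | segment {x y : E} (h : y ∈ connectedComponentIn (S ∩ ball x s) x) :
      IsChainPath S s (Path.segment x y)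
  | trans {x y z : E} {γ : Path x y} {γ' : Path y z} (h : IsChainPath S s γ)
      (h' : IsChainPath S s γ') : IsChainPath S s (γ.trans γ')

theorem segment_apply_mem_segment (x y : E) (t : unitInterval) :
    Path.segment x y t ∈ segment ℝ x y :=
  Path.range_segment x y ▸ mem_range_self t

theorem dist_segment_apply_le (x y : E) (t : unitInterval) :
    dist (Path.segment x y t) x ≤ dist y x :=
  dist_comm x y ▸
    mem_closedBall.mp (segment_subset_closedBall_left x y (segment_apply_mem_segment x y t))

theorem IsChainPath.exists_mem_dist_lt {γ : Path x y} (h : IsChainPath S s γ)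
    (t : unitInterval) : ∃ u ∈ S, dist (γ t) u < s := by
  induction h generalizing t with
  | @segment x y h =>
    exact ⟨x, (mem_of_mem_inter_left (connectedComponentIn_nonempty_iff.mp ⟨y, h⟩)),
      (dist_segment_apply_le x y t).trans_lt (connectedComponentIn_subset _ _ h).2⟩
  | trans _ _ ih ih' => exact path_trans_apply_mem (B := {z | ∃ u ∈ S, dist z u < s}) ih ih' t

theorem IsUniformlyLocallyConnected.exists_isChainPath (hS : IsUniformlyLocallyConnected S)
    (hs : 0 < s) {B C : Set E} (hB : Convex ℝ B) (hC : IsPreconnected C) (hCS : C ⊆ S)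
    (hCB : C ⊆ B) (hx : x ∈ C) (hy : y ∈ C) :
    ∃ γ : Path x y, IsChainPath S s γ ∧ ∀ t, γ t ∈ B := by
  obtain ⟨δ, hδ, hconn⟩ := hS s hs
  have hshort : ∀ u ∈ C, ∀ v ∈ C, dist u v < δ → ∃ γ : Path u v, IsChainPath S s γ ∧ ∀ t, γ t ∈ B :=
    fun u hu v hv huv => ⟨.segment u v, .segment (hconn u (hCS hu) v (hCS hv) huv), fun t =>
      hB.segment_subset (hCB hu) (hCB hv) (segment_apply_mem_segment u v t)⟩
  refine hC.induction₂' (P := fun x y => ∃ γ : Path x y, IsChainPath S s γ ∧ ∀ t, γ t ∈ B)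
    (fun u hu => ?_) ?_ hx hy
  · filter_upwards [inter_mem_nhdsWithin C (ball_mem_nhds u hδ)] with v ⟨hv, hvu⟩
    exact ⟨hshort u hu v hv (mem_ball'.mp hvu), hshort v hv u hu hvu⟩
  · rintro u v w - - - ⟨γ, h, hγ⟩ ⟨γ', h', hγ'⟩
    exact ⟨γ.trans γ', h.trans h', path_trans_apply_mem hγ hγ'⟩

theorem IsChainPath.exists_isChainPath (hS : IsUniformlyLocallyConnected S) (hr : 0 < r)
    {γ : Path x y} (h : IsChainPath S s γ) :
    ∃ γ' : Path x y, IsChainPath S r γ' ∧ ∀ t, dist (γ t) (γ' t) ≤ 2 * s := by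
  induction h with
  | @segment x y h =>
    have hcc := connectedComponentIn_subset (S ∩ ball x s) x
    obtain ⟨γ', h', hγ'⟩ := hS.exists_isChainPath hr (convex_ball x s)
      isPreconnected_connectedComponentIn (hcc.trans inter_subset_left)
      (hcc.trans inter_subset_right)
      (mem_connectedComponentIn (connectedComponentIn_nonempty_iff.mp ⟨y, h⟩)) h
    refine ⟨γ', h', fun t => ?_⟩
    have hyx : dist y x < s := (hcc h).2
    linarith [dist_triangle_right (Path.segment x y t) (γ' t) x, dist_segment_apply_le x y t,
      mem_ball.mp (hγ' t)]
  | trans _ _ ih ih' =>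
    obtain ⟨γ, h, hγ⟩ := ih
    obtain ⟨γ', h', hγ'⟩ := ih'
    refine ⟨γ.trans γ', h.trans h', fun t => ?_⟩
    rw [Path.trans_apply, Path.trans_apply]
    split_ifs
    exacts [hγ _, hγ' _]

theorem IsUniformlyLocallyConnected.exists_seq_isChainPath (hS : IsUniformlyLocallyConnected S)
    {r : ℕ → ℝ} (hr : ∀ n, 0 < r n) {C : Set E} (hC : IsPreconnected C) (hCS : C ⊆ S) (hx : x ∈ C)
    (hy : y ∈ C) : ∃ γ : ℕ → Path x y, (∀ n, IsChainPath S (r n) (γ n)) ∧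
      ∀ n t, dist (γ n t) (γ (n + 1) t) ≤ 2 * r n := by
  obtain ⟨γ₀, h₀, -⟩ := hS.exists_isChainPath (hr 0) convex_univ hC hCS (subset_univ _) hx hy
  choose! F hF hdist using fun n (γ : Path x y) (h : IsChainPath S (r n) γ) =>
    h.exists_isChainPath hS (hr (n + 1))
  have hγ : ∀ n, IsChainPath S (r n) (Nat.rec γ₀ F n : Path x y) := fun n => by
    induction n with
    | zero => exact h₀
    | succ n ih => exact hF n _ ih
  exact ⟨_, hγ, fun n => hdist n _ (hγ n)⟩

theorem IsUniformlyLocallyConnected.joinedIn [CompleteSpace E] (hS : IsUniformlyLocallyConnected S)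
    (hclosed : IsClosed S) {C : Set E} (hC : IsPreconnected C) (hCS : C ⊆ S) (hx : x ∈ C)
    (hy : y ∈ C) : JoinedIn S x y := by
  obtain ⟨γ, hγ, hdist⟩ :=
    hS.exists_seq_isChainPath (r := fun n => (1 / 2) ^ n) (fun n => by positivity) hC hCS hx hy
  have hcauchy : CauchySeq fun n => (γ n).toContinuousMap :=
    cauchySeq_of_le_geometric (1 / 2) 2 (by norm_num) fun n =>
      (ContinuousMap.dist_le (by positivity)).mpr (hdist n)
  obtain ⟨g, hg⟩ := cauchySeq_tendsto_of_complete hcauchy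
  have hgt : ∀ t, Tendsto (fun n => γ n t) atTop (𝓝 (g t)) := fun t =>
    ((continuous_eval_const t).tendsto g).comp hg
  refine ⟨⟨g, tendsto_nhds_unique (hgt 0) ?_, tendsto_nhds_unique (hgt 1) ?_⟩, fun t => ?_⟩
  · simp only [Path.source, tendsto_const_nhds]
  · simp only [Path.target, tendsto_const_nhds]
  · choose u huS hu using fun n => (hγ n).exists_mem_dist_lt t
    have hpow : Tendsto (fun n : ℕ => (1 / 2 : ℝ) ^ n) atTop (𝓝 0) :=
      tendsto_pow_atTop_nhds_zero_of_lt_one (by norm_num) (by norm_num)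
    exact hclosed.mem_of_tendsto ((tendsto_iff_of_dist (squeeze_zero (fun _ => dist_nonneg)
      (fun n => (hu n).le) hpow)).mp (hgt t)) (.of_forall huS)

end ChainPath

section GapSet

variable {α E : Type*} [CompleteLinearOrder α] {Γ : α → E} {C : Set α} {s t : α}

/-- A closed set of parameters such that the path `Γ` takes the same value at the two ends of each
complementary interval: skipping these intervals leaves a path with the same end points. -/
structure IsGapSet [TopologicalSpace α] (Γ : α → E) (C : Set α) : Prop where
  isClosed : IsClosed C
  bot_mem : ⊥ ∈ C
  top_mem : ⊤ ∈ C
  apply_eq_of_disjoint_Ioo : ∀ ⦃a⦄, a ∈ C → ∀ ⦃b⦄, b ∈ C → a < b → Disjoint C (Ioo a b) → Γ a = Γ b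

/-- The last point of the gap set `C` that does not exceed `t`. -/
def gapFloor (C : Set α) (t : α) : α := sSup (C ∩ Iic t)

/-- The first point of the gap set `C` that is not less than `t`. -/
def gapCeil (C : Set α) (t : α) : α := sInf (C ∩ Ici t)

theorem gapFloor_le : gapFloor C t ≤ t := sSup_le fun _ h => h.2

theorem le_gapCeil : t ≤ gapCeil C t := le_sInf fun _ h => h.2

theorem le_gapFloor (hs : s ∈ C) (hst : s ≤ t) : s ≤ gapFloor C t := le_sSup ⟨hs, hst⟩

theorem gapCeil_le (hs : s ∈ C) (hts : t ≤ s) : gapCeil C t ≤ s := sInf_le ⟨hs, hts⟩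

theorem gapFloor_mono : Monotone (gapFloor C) := fun _ _ h =>
  sSup_le_sSup (inter_subset_inter_right C (Iic_subset_Iic.mpr h))

theorem gapFloor_eq_self (ht : t ∈ C) : gapFloor C t = t :=
  gapFloor_le.antisymm (le_gapFloor ht le_rfl)

theorem isGapSet_univ [TopologicalSpace α] [DenselyOrdered α] (Γ : α → E) : IsGapSet Γ univ :=
  ⟨isClosed_univ, mem_univ _, mem_univ _, fun _ _ _ _ hab hdisj =>
    absurd (univ_disjoint.mp hdisj) (nonempty_Ioo.mpr hab).ne_empty⟩

variable [TopologicalSpace α] [OrderTopology α]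

theorem IsGapSet.gapFloor_mem (hC : IsGapSet Γ C) : gapFloor C t ∈ C :=
  (IsClosed.sSup_mem (s := C ∩ Iic t) ⟨⊥, hC.bot_mem, bot_le⟩
    (hC.isClosed.inter isClosed_Iic)).1

theorem IsGapSet.gapCeil_mem (hC : IsGapSet Γ C) : gapCeil C t ∈ C :=
  (IsClosed.sInf_mem (s := C ∩ Ici t) ⟨⊤, hC.top_mem, le_top⟩
    (hC.isClosed.inter isClosed_Ici)).1

theorem IsGapSet.apply_gapFloor_eq_apply_gapCeil (hC : IsGapSet Γ C) (hst : s ≤ t)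
    (hdisj : Disjoint C (Icc s t)) : Γ (gapFloor C s) = Γ (gapCeil C t) := by
  rcases (gapFloor_le.trans (hst.trans le_gapCeil) : gapFloor C s ≤ gapCeil C t).eq_or_lt with h | h
  · rw [h]
  refine hC.apply_eq_of_disjoint_Ioo hC.gapFloor_mem hC.gapCeil_mem h
    (Set.disjoint_left.mpr fun x hx hxI => ?_)
  refine Set.disjoint_left.mp hdisj hx ⟨le_of_not_ge fun hxs => ?_, le_of_not_ge fun htx => ?_⟩
  · exact hxI.1.not_ge (le_gapFloor hx hxs)
  · exact hxI.2.not_ge (gapCeil_le hx htx)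

theorem IsGapSet.apply_gapFloor_eq_apply_gapCeil_self (hC : IsGapSet Γ C) :
    Γ (gapFloor C t) = Γ (gapCeil C t) := by
  by_cases ht : t ∈ C
  · rw [gapFloor_eq_self ht, (gapCeil_le ht le_rfl).antisymm le_gapCeil]
  · exact hC.apply_gapFloor_eq_apply_gapCeil le_rfl (by simpa using ht)

theorem IsGapSet.sdiff_Ioo (hC : IsGapSet Γ C) (hs : s ∈ C) (ht : t ∈ C) (h : Γ s = Γ t) :
    IsGapSet Γ (C \ Ioo s t) where
  isClosed := hC.isClosed.sdiff isOpen_Ioo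
  bot_mem := ⟨hC.bot_mem, fun h => not_lt_bot h.1⟩
  top_mem := ⟨hC.top_mem, fun h => not_top_lt h.2⟩
  apply_eq_of_disjoint_Ioo := by
    rintro a ⟨ha, haI⟩ b ⟨hb, hbI⟩ hab hdisj
    by_cases hgap : Disjoint C (Ioo a b)
    · exact hC.apply_eq_of_disjoint_Ioo ha hb hab hgap
    obtain ⟨y, hyC, hay, hyb⟩ := Set.not_disjoint_iff.mp hgap
    rw [Set.disjoint_left] at hdisj
    have hsy : s < y ∧ y < t := by_contra fun hy => hdisj ⟨hyC, hy⟩ ⟨hay, hyb⟩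
    have hsa : s = a := by
      by_contra
      have := hdisj ⟨hs, fun h => lt_irrefl _ h.1⟩
      grind
    have hbt : b = t := by
      by_contra
      have := hdisj ⟨ht, fun h => lt_irrefl _ h.2⟩
      grind
    rw [← hsa, hbt, h]

theorem ordConnected_preimage_comp_gapFloor (hC : Minimal (IsGapSet Γ) C) (x : E) :
    ((fun t => Γ (gapFloor C t)) ⁻¹' {x}).OrdConnected := by
  refine ⟨fun s hs t ht u hu => ?_⟩
  have hmem : ∀ {t}, gapFloor C t ∈ C := hC.prop.gapFloor_mem
  have hst : Γ (gapFloor C s) = Γ (gapFloor C t) := Eq.trans hs (Eq.symm ht)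
  have hnot := (hC.le_of_le (hC.prop.sdiff_Ioo hmem hmem hst) sdiff_subset hmem :
    gapFloor C u ∈ _).2
  rcases (gapFloor_mono hu.1 : gapFloor C s ≤ gapFloor C u).eq_or_lt with hsu | hsu
  · exact (congrArg Γ hsu.symm).trans hs
  · exact (congrArg Γ ((gapFloor_mono hu.2).antisymm (not_lt.mp fun hut =>
      hnot ⟨hsu, hut⟩))).trans ht

variable [TopologicalSpace E]

theorem IsGapSet.continuous_comp_gapFloor (hC : IsGapSet Γ C) (hΓ : Continuous Γ) :
    Continuous fun t => Γ (gapFloor C t) := by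
  refine continuous_iff_continuousAt.mpr fun t => ?_
  have hsmall : Tendsto (fun s => uIcc s t) (𝓝 t) (𝓝 t).smallSets :=
    tendsto_id.uIcc tendsto_const_nhds
  rw [tendsto_smallSets_iff] at hsmall
  by_cases ht : t ∈ C
  · intro V hV
    replace hV : V ∈ 𝓝 (Γ t) := gapFloor_eq_self ht ▸ hV
    refine mem_map.mpr ?_
    filter_upwards [hsmall _ (hΓ.continuousAt hV)] with s hs
    rcases le_total s t with hst | hts
    · rw [mem_preimage, hC.apply_gapFloor_eq_apply_gapCeil_self]
      exact hs (uIcc_of_le hst ▸ ⟨le_gapCeil, gapCeil_le ht hst⟩)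
    · exact hs (uIcc_of_ge hts ▸ ⟨le_gapFloor ht hts, gapFloor_le⟩)
  · refine continuousAt_const.congr (f := fun _ => Γ (gapFloor C t)) ?_
    filter_upwards [hsmall _ (hC.isClosed.isOpen_compl.mem_nhds ht)] with s hs
    refine congrArg (fun S => Γ (sSup S)) (Set.ext fun x => and_congr_right fun hx => ?_)
    simp only [mem_Iic]
    by_contra hne
    refine hs ?_ hx
    rw [mem_uIcc]
    grind

variable [DenselyOrdered α]

theorem isGapSet_sInter_of_isChain [T2Space E] (hΓ : Continuous Γ) {c : Set (Set α)}
    (hc : IsChain (· ⊆ ·) c) (hne : c.Nonempty) (hgap : ∀ C ∈ c, IsGapSet Γ C) :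
    IsGapSet Γ (⋂₀ c) where
  isClosed := isClosed_sInter fun C hC => (hgap C hC).isClosed
  bot_mem C hC := (hgap C hC).bot_mem
  top_mem C hC := (hgap C hC).top_mem
  apply_eq_of_disjoint_Ioo a ha b hb hab hdisj := by
    by_contra hΓab
    obtain ⟨U, V, hU, hV, haU, hbV, hUV⟩ := t2_separation hΓab
    obtain ⟨m, ham, hmb⟩ := exists_between hab
    obtain ⟨u, ⟨hau, hum⟩, huU⟩ := (mem_nhdsGE_iff_exists_mem_Ioc_Ico_subset ham).mp
      (mem_nhdsWithin_of_mem_nhds ((hU.preimage hΓ).mem_nhds haU))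
    obtain ⟨v, ⟨hmv, hvb⟩, hvV⟩ := (mem_nhdsLE_iff_exists_mem_Ico_Ioc_subset hmb).mp
      (mem_nhdsWithin_of_mem_nhds ((hV.preimage hΓ).mem_nhds hbV))
    have : Nonempty c := hne.to_subtype
    obtain ⟨⟨C, hC⟩, hCuv⟩ := exists_subset_nhds_of_compactSpace (V := ((↑) : c → Set α))
      (IsChain.directed (r := fun s t : Set α => s ⊇ t) (f := id) hc.symm)
      (fun C => (hgap C C.2).isClosed) (U := Iio u ∪ Ioi v) fun x hx => by
        rw [← sInter_eq_iInter] at hx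
        refine (isOpen_Iio.union isOpen_Ioi).mem_nhds ?_
        by_contra hxuv
        have := Set.disjoint_left.mp hdisj hx
        grind
    have huC : u ∉ C := fun h => (hCuv h).elim (lt_irrefl u) (hum.trans hmv).not_gt
    have hvC : v ∉ C := fun h => (hCuv h).elim (hum.trans hmv).not_gt (lt_irrefl v)
    have hfloor : gapFloor C u ∈ Ico a u := ⟨le_gapFloor (ha C hC) hau.le,
      gapFloor_le.lt_of_ne fun h => huC (h ▸ (hgap C hC).gapFloor_mem)⟩
    have hceil : gapCeil C v ∈ Ioc v b := ⟨le_gapCeil.lt_of_ne fun h =>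
      hvC (h ▸ (hgap C hC).gapCeil_mem), gapCeil_le (hb C hC) hvb.le⟩
    refine Set.disjoint_left.mp hUV (huU hfloor) ?_
    rw [(hgap C hC).apply_gapFloor_eq_apply_gapCeil (hum.trans hmv) (Set.disjoint_left.mpr
      fun x hx hxI => (hCuv hx).elim hxI.1.not_gt hxI.2.not_gt)]
    exact hvV hceil

theorem exists_minimal_isGapSet [T2Space E] (hΓ : Continuous Γ) : ∃ C, Minimal (IsGapSet Γ) C := by
  obtain ⟨C, -, hC⟩ := zorn_superset_nonempty {C | IsGapSet Γ C} (fun c hcs hc hne =>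
    ⟨⋂₀ c, isGapSet_sInter_of_isChain hΓ hc hne hcs, fun _ => sInter_subset_of_mem⟩) univ
    (isGapSet_univ Γ)
  exact ⟨C, hC⟩

end GapSet

section RunningSup

variable {f g : unitInterval → ℝ} {a : ℝ} {s t : unitInterval}

/-- The supremum of `g` over the parameters up to `t`. -/
noncomputable def runningSup (g : unitInterval → ℝ) (t : unitInterval) : ℝ := sSup (g '' Iic t)

theorem continuous_runningSup (hg : Continuous g) : Continuous (runningSup g) := by
  have himage : ∀ t, g '' Iic t = (fun u => g (u * t)) '' univ := fun t => by
    refine Subset.antisymm (image_subset_iff.mpr fun s hs => ?_)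
      (image_subset_iff.mpr fun u _ => ⟨u * t, unitInterval.mul_le_right, rfl⟩)
    refine ⟨⟨s / t, unitInterval.div_mem s.2.1 t.2.1 hs⟩, mem_univ _, congrArg g (Subtype.ext ?_)⟩
    exact div_mul_cancel_of_imp fun ht => le_antisymm (ht ▸ hs : (s : ℝ) ≤ 0) s.2.1
  refine (isCompact_univ.continuous_sSup (f := fun t u => g (u * t)) (by fun_prop)).congr
    fun t => ?_
  rw [runningSup, himage]

theorem le_runningSup (hg : ∀ t, g t ≤ a) (hst : s ≤ t) : g s ≤ runningSup g t :=
  le_csSup ⟨a, forall_mem_image.mpr fun t _ => hg t⟩ (mem_image_of_mem g hst)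

theorem runningSup_le (h : ∀ s ≤ t, g s ≤ a) : runningSup g t ≤ a :=
  csSup_le (nonempty_Iic.image g) (forall_mem_image.mpr h)

theorem monotone_runningSup (hg : ∀ t, g t ≤ a) : Monotone (runningSup g) := fun _ _ hst =>
  runningSup_le fun _ hr => le_runningSup hg (hr.trans hst)

end RunningSup

section InjectivePath

variable {E : Type*} [MetricSpace E]

/-- How far the path `β` departs, up to the parameter `t`, from its initial piece up to `q`. -/
noncomputable def departure (β : unitInterval → E) (q t : unitInterval) : ℝ :=
  runningSup (fun s => min 1 (infDist (β s) (β '' Iic q))) t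

variable {β : unitInterval → E} {q s t : unitInterval}

theorem continuous_departure (hβ : Continuous β) : Continuous (departure β q) :=
  continuous_runningSup (continuous_const.min ((continuous_infDist_pt _).comp hβ))

theorem monotone_departure : Monotone (departure β q) :=
  monotone_runningSup fun _ => min_le_left _ _

theorem departure_le_one : departure β q t ≤ 1 := runningSup_le fun _ _ => min_le_left _ _

theorem le_departure (hst : s ≤ t) : min 1 (infDist (β s) (β '' Iic q)) ≤ departure β q t :=
  le_runningSup (g := fun s => min 1 (infDist (β s) (β '' Iic q))) (fun _ => min_le_left _ _) hst

theorem departure_nonneg : 0 ≤ departure β q t :=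
  (le_min zero_le_one infDist_nonneg).trans (le_departure (le_refl t))

theorem departure_eq_zero (h : t ≤ q) : departure β q t = 0 :=
  (runningSup_le fun _ hs => (min_le_right _ _).trans
    (infDist_zero_of_mem (mem_image_of_mem β (hs.trans h))).le).antisymm departure_nonneg

theorem departure_pos (hβ : Continuous β) (h : β t ∉ β '' Iic q) : 0 < departure β q t :=
  (lt_min one_pos (((isClosed_Iic.isCompact.image hβ).isClosed.notMem_iff_infDist_pos
    (nonempty_Iic.image β)).mp h)).trans_le (le_departure le_rfl)

theorem departure_eq (hfib : ∀ x, (β ⁻¹' {x}).OrdConnected) (h : β s = β t) :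
    departure β q s = departure β q t := by
  wlog hst : s ≤ t generalizing s t
  · exact (this h.symm (le_of_not_ge hst)).symm
  refine (monotone_departure hst).antisymm (runningSup_le fun r hr => ?_)
  rcases le_total r s with hrs | hsr
  · exact le_departure hrs
  · have hrs : β r = β s := (hfib (β s)).out rfl h.symm ⟨hsr, hr⟩
    rw [hrs]
    exact le_departure le_rfl

theorem exists_forall_mem_Ioo_departure_pos (hβ : Continuous β)
    (hfib : ∀ x, (β ⁻¹' {x}).OrdConnected) (hst : s ≤ t) (hne : β s ≠ β t) :
    ∃ d, s < d ∧ ∀ q ∈ Ioo s d, 0 < departure β q t := by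
  have hclosed : IsClosed (Icc s t ∩ β ⁻¹' {β t}) :=
    isClosed_Icc.inter (isClosed_singleton.preimage hβ)
  obtain ⟨d, hd, hmin⟩ := hclosed.isCompact.exists_isLeast ⟨t, ⟨hst, le_rfl⟩, rfl⟩
  refine ⟨d, hd.1.1.lt_of_ne fun h => hne (h ▸ hd.2), fun q hq => departure_pos hβ ?_⟩
  rintro ⟨r, hrq, hrt⟩
  have hrd : r < d := hrq.trans_lt hq.2
  rcases le_total s r with hsr | hrs
  · exact hrd.not_ge (hmin ⟨⟨hsr, hrd.le.trans hd.1.2⟩, hrt⟩)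
  · exact hne ((hfib (β t)).out hrt rfl ⟨hrs, hst⟩)

theorem exists_monotone_eq_iff (hβ : Continuous β) (hfib : ∀ x, (β ⁻¹' {x}).OrdConnected) :
    ∃ τ : unitInterval → ℝ, Continuous τ ∧ Monotone τ ∧ ∀ s t, τ s = τ t ↔ β s = β t := by
  set q := TopologicalSpace.denseSeq unitInterval
  set w : ℕ → unitInterval → ℝ := fun n t => (1 / 2) ^ n * departure β (q n) t
  have hwle : ∀ n t, w n t ≤ (1 / 2) ^ n := fun n t =>
    mul_le_of_le_one_right (by positivity) departure_le_one
  have hw0 : ∀ n t, 0 ≤ w n t := fun n t => mul_nonneg (by positivity) departure_nonneg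
  have hsum : ∀ t, Summable fun n => w n t := fun t =>
    summable_geometric_two.of_nonneg_of_le (fun n => hw0 n t) fun n => hwle n t
  have hmono : ∀ n, Monotone (w n) := fun n => monotone_departure.const_mul (by positivity)
  have hlt : ∀ s t, s ≤ t → β s ≠ β t → ∑' n, w n s < ∑' n, w n t := fun s t hst hne => by
    obtain ⟨d, hsd, hd⟩ := exists_forall_mem_Ioo_departure_pos hβ hfib hst hne
    obtain ⟨n, hn⟩ := (TopologicalSpace.denseRange_denseSeq unitInterval).exists_mem_open
      isOpen_Ioo (nonempty_Ioo.mpr hsd)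
    refine (hsum s).tsum_lt_tsum (fun n => hmono n hst) (i := n) ?_ (hsum t)
    refine mul_lt_mul_of_pos_left ?_ (by positivity)
    rw [departure_eq_zero hn.1.le]
    exact hd _ hn
  refine ⟨fun t => ∑' n, w n t, ?_, fun s t hst => ?_, fun s t => ⟨fun h => ?_, fun h => ?_⟩⟩
  · refine continuous_tsum (fun n => continuous_const.mul (continuous_departure hβ))
      summable_geometric_two fun n t => ?_
    rw [Real.norm_of_nonneg (hw0 n t)]
    exact hwle n t
  · exact (hsum s).tsum_le_tsum (fun n => hmono n hst) (hsum t)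
  · by_contra hne
    rcases le_total s t with hst | hts
    · exact (hlt s t hst hne).ne h
    · exact (hlt t s hts (Ne.symm hne)).ne' h
  · simp only [w, departure_eq hfib h]

theorem exists_surjective_eq_iff (hβ : Continuous β) (hfib : ∀ x, (β ⁻¹' {x}).OrdConnected)
    (hne : β 0 ≠ β 1) : ∃ ρ : unitInterval → unitInterval, Continuous ρ ∧ ρ.Surjective ∧
      ρ 0 = 0 ∧ ρ 1 = 1 ∧ ∀ s t, ρ s = ρ t ↔ β s = β t := by
  obtain ⟨τ, hτ, hmono, hiff⟩ := exists_monotone_eq_iff hβ hfib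
  have hpos : 0 < τ 1 - τ 0 :=
    sub_pos.mpr ((hmono zero_le_one).lt_of_ne fun h => hne ((hiff 0 1).mp h))
  set ρ : unitInterval → unitInterval := fun t => ⟨(τ t - τ 0) / (τ 1 - τ 0),
    div_nonneg (sub_nonneg.mpr (hmono t.2.1)) hpos.le,
    (div_le_one hpos).mpr (sub_le_sub_right (hmono t.2.2) _)⟩
  have hρ : Continuous ρ := ((hτ.sub continuous_const).div_const _).subtype_mk _
  have hρ0 : ρ 0 = 0 := Subtype.ext (by simp [ρ])
  have hρ1 : ρ 1 = 1 := Subtype.ext (div_self hpos.ne')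
  refine ⟨ρ, hρ, fun r => ?_, hρ0, hρ1, fun s t => ?_⟩
  · exact mem_range_of_exists_le_of_exists_ge hρ ⟨0, hρ0.trans_le unitInterval.nonneg'⟩
      ⟨1, unitInterval.le_one'.trans_eq hρ1.symm⟩
  · rw [Subtype.ext_iff, div_left_inj' hpos.ne', sub_left_inj, hiff]

theorem exists_injective_path {x y : E} (γ : Path x y) (hxy : x ≠ y) :
    ∃ γ' : Path x y, Function.Injective γ' ∧ range γ' ⊆ range γ := by
  obtain ⟨C, hC⟩ := exists_minimal_isGapSet γ.continuous
  set β : C(unitInterval, E) := ⟨_, hC.prop.continuous_comp_gapFloor γ.continuous⟩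
  have hβ0 : β 0 = x := (congrArg γ (gapFloor_eq_self hC.prop.bot_mem)).trans γ.source
  have hβ1 : β 1 = y := (congrArg γ (gapFloor_eq_self hC.prop.top_mem)).trans γ.target
  obtain ⟨ρ, hρ, hsurj, hρ0, hρ1, hiff⟩ := exists_surjective_eq_iff β.continuous
    (ordConnected_preimage_comp_gapFloor hC) (hβ0.trans_ne (hxy.trans_eq hβ1.symm))
  have hquot : IsQuotientMap (⟨ρ, hρ⟩ : C(unitInterval, unitInterval)) :=
    hρ.isClosedMap.isQuotientMap hρ hsurj
  set γ' := hquot.lift β fun s t h => (hiff s t).mp h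
  have hlift : ∀ t, γ' (ρ t) = β t := fun t =>
    DFunLike.congr_fun (hquot.lift_comp β fun s t h => (hiff s t).mp h) t
  refine ⟨⟨γ', by rw [← hρ0]; exact (hlift 0).trans hβ0, by rw [← hρ1]; exact (hlift 1).trans hβ1⟩,
    hsurj.forall₂.mpr fun s t h => ?_, ?_⟩
  · exact (hiff s t).mpr ((hlift s).symm.trans (Eq.trans h (hlift t)))
  · rintro _ ⟨r, rfl⟩
    obtain ⟨t, rfl⟩ := hsurj r
    exact ⟨gapFloor C t, (hlift t).symm⟩

end InjectivePath

/-- The preimage of `K` under the covering `w ↦ p + exp w` of `ℂ \ {p}`. -/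
def expPreimage (K : Set ℂ) (p : ℂ) : Set ℂ := {w | p + Complex.exp w ∈ K}

/-- The branch of `z ↦ log (z - p)` near `p + exp w` which takes the value `w` at that point. -/
noncomputable def logBranch (p w z : ℂ) : ℂ := w + Complex.log ((z - p) / Complex.exp w)

section ExpPreimage

variable {K C : Set ℂ} {p w z : ℂ}

theorem isClosed_expPreimage (hK : IsClosed K) (p : ℂ) : IsClosed (expPreimage K p) :=
  hK.preimage (continuous_const.add Complex.continuous_exp)

theorem add_exp_logBranch (hz : z ≠ p) : p + Complex.exp (logBranch p w z) = z := by
  have hne : (z - p) / Complex.exp w ≠ 0 :=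
    div_ne_zero (sub_ne_zero.mpr hz) (Complex.exp_ne_zero w)
  rw [logBranch, Complex.exp_add, Complex.exp_log hne, mul_div_cancel₀ _ (Complex.exp_ne_zero w),
    add_sub_cancel]

theorem logBranch_add_exp {w' : ℂ} (h : ‖w' - w‖ < 1) :
    logBranch p w (p + Complex.exp w') = w' := by
  have him := abs_lt.mp ((Complex.abs_im_le_norm (w' - w)).trans_lt h)
  have hpi := Real.pi_gt_three
  rw [logBranch, add_sub_cancel_left, ← Complex.exp_sub,
    Complex.log_exp (by linarith) (by linarith), add_sub_cancel]

theorem logBranch_self : logBranch p w (p + Complex.exp w) = w :=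
  logBranch_add_exp (by simp)

theorem continuousOn_logBranch :
    ContinuousOn (logBranch p w) (ball (p + Complex.exp w) ‖Complex.exp w‖) := by
  refine continuousOn_const.add (ContinuousOn.clog (by fun_prop) fun z hz => ?_)
  apply div_mem_slitPlane_of_norm_sub_lt
  rwa [sub_sub, ← dist_eq_norm]

theorem mapsTo_logBranch (hp : p ∉ K) : MapsTo (logBranch p w) K (expPreimage K p) :=
  fun z hz => show p + Complex.exp (logBranch p w z) ∈ K from
    (add_exp_logBranch (ne_of_mem_of_not_mem hz hp)).symm ▸ hz

theorem logBranch_mem_connectedComponentIn {s : Set ℂ} (hC : IsPreconnected C)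
    (hCb : C ⊆ ball (p + Complex.exp w) ‖Complex.exp w‖) (hw : p + Complex.exp w ∈ C)
    (hCs : MapsTo (logBranch p w) C s) (hz : z ∈ C) :
    logBranch p w z ∈ connectedComponentIn s w :=
  (hC.image _ (continuousOn_logBranch.mono hCb)).subset_connectedComponentIn
    ⟨_, hw, logBranch_self⟩ hCs.image_subset (mem_image_of_mem _ hz)

theorem exists_forall_mem_expPreimage_le_norm_exp (hK : IsClosed K) (hp : p ∉ K) :
    ∃ d > 0, ∀ w ∈ expPreimage K p, d ≤ ‖Complex.exp w‖ := by
  obtain ⟨d, hd, hball⟩ := Metric.isOpen_iff.mp hK.isOpen_compl p hp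
  refine ⟨d, hd, fun w hw => not_lt.mp fun hlt => hball ?_ hw⟩
  rwa [mem_ball_iff_norm, add_sub_cancel_left]

theorem exists_forall_dist_logBranch_lt {ε : ℝ} (hε : 0 < ε) :
    ∃ η > 0, ∀ p w z : ℂ, dist z (p + Complex.exp w) < η * ‖Complex.exp w‖ →
      dist (logBranch p w z) w < ε := by
  obtain ⟨η, hη, hlog⟩ := Metric.continuousAt_iff.mp
    (continuousAt_clog Complex.one_mem_slitPlane) ε hε
  refine ⟨η, hη, fun p w z hz => ?_⟩
  rw [logBranch, dist_self_add_left, ← dist_zero_right, ← Complex.log_one]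
  refine hlog ?_
  rwa [dist_eq_norm, div_sub_one (Complex.exp_ne_zero w), norm_div,
    div_lt_iff₀ (norm_pos_iff.mpr (Complex.exp_ne_zero w)), sub_sub, ← dist_eq_norm]

theorem exists_forall_mem_expPreimage_dist_exp_lt (hK : IsCompact K) (p : ℂ) {ε : ℝ}
    (hε : 0 < ε) : ∃ δ > 0, ∀ w ∈ expPreimage K p, ∀ w', dist w w' < δ →
      dist (p + Complex.exp w) (p + Complex.exp w') < ε := by
  obtain ⟨M, hM0, hM⟩ := hK.isBounded.subset_closedBall_lt 0 p
  obtain ⟨δ, hδ, hexp⟩ := Metric.continuousAt_iff.mp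
    (Complex.continuous_exp.continuousAt (x := 0)) (ε / M) (by positivity)
  refine ⟨δ, hδ, fun w hw w' hww' => ?_⟩
  have hexp' : ‖Complex.exp (w' - w) - 1‖ < ε / M := by
    rw [← Complex.exp_zero, ← dist_eq_norm]
    exact hexp (by rwa [dist_zero_right, ← dist_eq_norm, dist_comm])
  have hnorm : ‖Complex.exp w‖ ≤ M := by simpa using mem_closedBall_iff_norm.mp (hM hw)
  calc dist (p + Complex.exp w) (p + Complex.exp w')
      = ‖Complex.exp w‖ * ‖Complex.exp (w' - w) - 1‖ := by
        rw [dist_add_left, dist_comm, dist_eq_norm, ← norm_mul, mul_sub, ← Complex.exp_add,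
          add_sub_cancel, mul_one]
    _ ≤ M * ‖Complex.exp (w' - w) - 1‖ := by gcongr
    _ < M * (ε / M) := by gcongr
    _ = ε := mul_div_cancel₀ ε hM0.ne'

theorem isUniformlyLocallyConnected_expPreimage (h : IsUniformlyLocallyConnected K)
    (hK : IsCompact K) (hp : p ∉ K) : IsUniformlyLocallyConnected (expPreimage K p) := by
  intro ε hε
  obtain ⟨d, hd, hle⟩ := exists_forall_mem_expPreimage_le_norm_exp hK.isClosed hp
  obtain ⟨η, hη, hlog⟩ := exists_forall_dist_logBranch_lt hε
  obtain ⟨δ, hδ, hconn⟩ := h (min 1 η * d) (by positivity)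
  obtain ⟨δ', hδ', hexp⟩ := exists_forall_mem_expPreimage_dist_exp_lt hK p hδ
  refine ⟨min δ' 1, by positivity, fun x hx y hy hxy => ?_⟩
  set C := connectedComponentIn (K ∩ ball (p + Complex.exp x) (min 1 η * d)) (p + Complex.exp x)
  have hyC : p + Complex.exp y ∈ C :=
    hconn _ hx _ hy (hexp x hx y (hxy.trans_le (min_le_left _ _)))
  have hCK : C ⊆ K ∩ ball (p + Complex.exp x) (min 1 η * d) := connectedComponentIn_subset _ _
  have hxC : p + Complex.exp x ∈ C := mem_connectedComponentIn ⟨hx, mem_ball_self (by positivity)⟩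
  have hCb : C ⊆ ball (p + Complex.exp x) ‖Complex.exp x‖ := fun z hz =>
    (mem_ball.mp (hCK hz).2).trans_le
      ((mul_le_of_le_one_left hd.le (min_le_left _ _)).trans (hle x hx))
  have hCη : MapsTo (logBranch p x) C (ball x ε) := fun z hz =>
    hlog p x z ((mem_ball.mp (hCK hz).2).trans_le
      (mul_le_mul (min_le_right _ _) (hle x hx) hd.le hη.le))
  have hyx : ‖y - x‖ < 1 := by
    rw [← dist_eq_norm, dist_comm]
    exact hxy.trans_le (min_le_right _ _)
  rw [← logBranch_add_exp (p := p) hyx]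
  exact logBranch_mem_connectedComponentIn isPreconnected_connectedComponentIn hCb hxC
    (fun z hz => ⟨mapsTo_logBranch hp (hCK hz).1, hCη hz⟩) hyC

theorem IsUniformlyLocallyConnected.exists_forall_logBranch_mem_connectedComponentIn
    (h : IsUniformlyLocallyConnected K) (hK : IsClosed K) (hp : p ∉ K) :
    ∃ δ > 0, ∀ w ∈ expPreimage K p, ∀ z ∈ K, dist (p + Complex.exp w) z < δ →
      logBranch p w z ∈ connectedComponentIn (expPreimage K p) w := by
  obtain ⟨d, hd, hle⟩ := exists_forall_mem_expPreimage_le_norm_exp hK hp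
  obtain ⟨δ, hδ, hconn⟩ := h d hd
  refine ⟨δ, hδ, fun w hw z hz hwz => ?_⟩
  have hsub := connectedComponentIn_subset (K ∩ ball (p + Complex.exp w) d) (p + Complex.exp w)
  exact logBranch_mem_connectedComponentIn isPreconnected_connectedComponentIn
    (fun y hy => ball_subset_ball (hle w hw) (hsub hy).2)
    (mem_connectedComponentIn ⟨hw, mem_ball_self hd⟩)
    (fun y hy => mapsTo_logBranch hp (hsub hy).1) (hconn _ hw z hz hwz)

theorem IsUniformlyLocallyConnected.surjOn_connectedComponentIn_expPreimage
    (h : IsUniformlyLocallyConnected K) (hK : IsClosed K) (hconn : IsPreconnected K) (hp : p ∉ K)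
    (hw : w ∈ expPreimage K p) :
    SurjOn (fun v => p + Complex.exp v) (connectedComponentIn (expPreimage K p) w) K := by
  obtain ⟨δ, hδ, hstep⟩ := h.exists_forall_logBranch_mem_connectedComponentIn hK hp
  set Q := connectedComponentIn (expPreimage K p) w
  set image : Set ℂ := (fun v => p + Complex.exp v) '' Q
  have hnear : ∀ x ∈ image, ∀ y ∈ K, dist x y < δ → y ∈ image := by
    rintro _ ⟨v, hv, rfl⟩ y hy hvy
    refine ⟨logBranch p v y, ?_, add_exp_logBranch (ne_of_mem_of_not_mem hy hp)⟩
    rw [show Q = _ from connectedComponentIn_eq hv]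
    exact hstep v (connectedComponentIn_subset _ _ hv) y hy hvy
  intro z hz
  refine hconn.induction₂' (fun x y => x ∈ image → y ∈ image) (fun x hx => ?_)
    (fun x y z _ _ _ hxy hyz hx => hyz (hxy hx)) hw hz ⟨w, mem_connectedComponentIn hw, rfl⟩
  filter_upwards [inter_mem_nhdsWithin K (ball_mem_nhds x hδ)] with y hy
  exact ⟨fun hx' => hnear x hx' y hy.1 (dist_comm x y ▸ hy.2), fun hy' => hnear y hy' x hx hy.2⟩

theorem IsUniformlyLocallyConnected.hasLogOn_sub_of_injOn_exp
    (h : IsUniformlyLocallyConnected K) (hK : IsClosed K) (hconn : IsPreconnected K) (hp : p ∉ K)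
    (hw : w ∈ expPreimage K p)
    (hinj : InjOn Complex.exp (connectedComponentIn (expPreimage K p) w)) :
    HasLogOn (fun z => z - p) K := by
  obtain ⟨δ, hδ, hstep⟩ := h.exists_forall_logBranch_mem_connectedComponentIn hK hp
  have hsurj : ∀ z ∈ K, ∃ v ∈ connectedComponentIn (expPreimage K p) w, p + Complex.exp v = z :=
    h.surjOn_connectedComponentIn_expPreimage hK hconn hp hw
  choose! l hlQ hl using hsurj
  refine ⟨l, fun z hz => ?_, fun z hz => eq_sub_of_add_eq' (hl z hz)⟩
  have heq : l =ᶠ[𝓝[K] z] logBranch p (l z) := by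
    filter_upwards [inter_mem_nhdsWithin K (ball_mem_nhds z hδ)] with y hy
    refine hinj (hlQ y hy.1) ?_ ?_
    · rw [connectedComponentIn_eq (hlQ z hz)]
      refine hstep _ (connectedComponentIn_subset _ _ (hlQ z hz)) y hy.1 ?_
      rw [hl z hz, dist_comm]
      exact hy.2
    · refine add_left_cancel ((hl y hy.1).trans ?_)
      exact (add_exp_logBranch (ne_of_mem_of_not_mem hy.1 hp)).symm
  have hcont : ContinuousAt (logBranch p (l z)) z :=
    continuousOn_logBranch.continuousAt (isOpen_ball.mem_nhds (by
      rw [hl z hz]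
      exact mem_ball_self (norm_pos_iff.mpr (Complex.exp_ne_zero _))))
  exact hcont.continuousWithinAt.congr_of_eventuallyEq heq (heq.eq_of_nhdsWithin hz)

end ExpPreimage

theorem two_pi_le_norm_sub_of_exp_eq {z w : ℂ} (h : Complex.exp z = Complex.exp w) (hne : z ≠ w) :
    2 * Real.pi ≤ ‖z - w‖ := by
  obtain ⟨n, rfl⟩ := Complex.exp_eq_exp_iff_exists_int.mp h
  have hn : n ≠ 0 := by
    rintro rfl
    simp at hne
  have hone : (1 : ℝ) ≤ |(n : ℝ)| := by exact_mod_cast Int.one_le_abs hn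
  have hnorm : ‖(2 * Real.pi * Complex.I : ℂ)‖ = 2 * Real.pi := by simp [abs_of_pos Real.pi_pos]
  rw [add_sub_cancel_left, norm_mul, Complex.norm_intCast, hnorm]
  exact le_mul_of_one_le_left Real.two_pi_pos.le hone

-- Minimise `t - s` over the compact set of pairs `s ≤ t` with `exp (α s) = exp (α t)` and
-- `2 * π ≤ ‖α s - α t‖`.
theorem exists_injOn_Ico_exp {α : ℝ → ℂ} {a b : ℝ} (hα : Continuous α)
    (hinj : InjOn α (Icc a b)) (hab : a < b) (hexp : Complex.exp (α a) = Complex.exp (α b)) :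
    ∃ a' b', a' < b' ∧ Icc a' b' ⊆ Icc a b ∧ α a' ≠ α b' ∧
      Complex.exp (α a') = Complex.exp (α b') ∧
      InjOn (fun t => Complex.exp (α t)) (Ico a' b') := by
  set T : Set (ℝ × ℝ) := (Icc a b ×ˢ Icc a b) ∩ ({x | x.1 ≤ x.2} ∩
    ({x | Complex.exp (α x.1) = Complex.exp (α x.2)} ∩ {x | 2 * Real.pi ≤ ‖α x.1 - α x.2‖}))
  have hT : IsCompact T := (isCompact_Icc.prod isCompact_Icc).inter_right <|
    (isClosed_le continuous_fst continuous_snd).inter <|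
      (isClosed_eq (by fun_prop) (by fun_prop)).inter (isClosed_le (by fun_prop) (by fun_prop))
  have hmemT : ∀ s ∈ Icc a b, ∀ t ∈ Icc a b, s < t → Complex.exp (α s) = Complex.exp (α t) →
      (s, t) ∈ T := fun s hs t ht hst he =>
    ⟨⟨hs, ht⟩, hst.le, he, two_pi_le_norm_sub_of_exp_eq he fun h => hst.ne (hinj hs ht h)⟩
  obtain ⟨⟨s, t⟩, ⟨⟨hs, ht⟩, hst, he, hfar⟩, hmin⟩ := hT.exists_isMinOn
    ⟨(a, b), hmemT a (left_mem_Icc.mpr hab.le) b (right_mem_Icc.mpr hab.le) hab hexp⟩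
    (f := fun x => x.2 - x.1) (by fun_prop)
  have hne : α s ≠ α t := fun h => by
    simp only [mem_ofPred_eq, h, sub_self, norm_zero] at hfar
    exact Real.two_pi_pos.not_ge hfar
  have hnot : ∀ x ∈ Ico s t, ∀ y ∈ Ico s t, x < y → Complex.exp (α x) ≠ Complex.exp (α y) := by
    intro x hx y hy hxy h
    have hle : t - s ≤ y - x := hmin (hmemT x ⟨hs.1.trans hx.1, hx.2.le.trans ht.2⟩ y
      ⟨hs.1.trans hy.1, hy.2.le.trans ht.2⟩ hxy h)
    linarith [hx.1, hy.2]
  refine ⟨s, t, lt_of_le_of_ne hst fun h => hne (congrArg α h), Icc_subset_Icc hs.1 ht.2, hne, he,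
    fun x hx y hy h => ?_⟩
  obtain hxy | hxy | hxy := lt_trichotomy x y
  · exact absurd h (hnot x hx y hy hxy)
  · exact hxy
  · exact absurd h.symm (hnot y hy x hx hxy)

theorem exists_injective_circle_of_injOn_Ico {Y : Type*} [TopologicalSpace Y] {g : ℝ → Y}
    {a b : ℝ} (hab : a < b) (hg : ContinuousOn g (Icc a b)) (hends : g a = g b)
    (hinj : InjOn g (Ico a b)) :
    ∃ ψ : Circle → Y, Continuous ψ ∧ ψ.Injective ∧ range ψ = g '' Ico a b := by
  have hT : b - a ≠ 0 := (sub_pos.mpr hab).ne'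
  have : Fact (0 < b - a) := ⟨sub_pos.mpr hab⟩
  set e := (AddCircle.homeomorphCircle hT).symm
  have hb : a + (b - a) = b := add_sub_cancel a b
  have hrep := AddCircle.coe_image_Ico_eq (b - a) a
  rw [hb] at hrep
  have hval : ∀ t ∈ Ico a b, AddCircle.liftIco (b - a) a g t = g t := fun t ht =>
    AddCircle.liftIco_coe_apply (hb.symm ▸ ht)
  refine ⟨AddCircle.liftIco (b - a) a g ∘ e, (AddCircle.liftIco_continuous (hb.symm ▸ hends)
    (hb.symm ▸ hg)).comp e.continuous, Function.Injective.comp (fun θ θ' h => ?_) e.injective, ?_⟩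
  · obtain ⟨s, hs, rfl⟩ := hrep.symm ▸ mem_univ θ
    obtain ⟨t, ht, rfl⟩ := hrep.symm ▸ mem_univ θ'
    rw [hval s hs, hval t ht] at h
    rw [hinj hs ht h]
  · rw [e.surjective.range_comp, ← image_univ, ← hrep, image_image]
    exact image_congr hval

theorem IsUniformlyLocallyConnected.exists_injective_circle {K : Set ℂ} {p : ℂ}
    (h : IsUniformlyLocallyConnected K) (hK : IsCompact K) (hconn : IsConnected K) (hp : p ∉ K)
    (hlog : ¬ HasLogOn (fun z => z - p) K) :
    ∃ ψ : Circle → ℂ, Continuous ψ ∧ ψ.Injective ∧ range ψ ⊆ K ∧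
      ¬ HasLogOn (fun z => z - p) (range ψ) := by
  obtain ⟨z, hz⟩ := hconn.nonempty
  have hw : logBranch p 0 z ∈ expPreimage K p := mapsTo_logBranch hp hz
  have hninj := mt (h.hasLogOn_sub_of_injOn_exp hK.isClosed hconn.isPreconnected hp hw) hlog
  simp only [InjOn, not_forall] at hninj
  obtain ⟨x, hx, y, hy, hexp, hxy⟩ := hninj
  obtain ⟨γ, hγ⟩ := (isUniformlyLocallyConnected_expPreimage h hK hp).joinedIn
    (isClosed_expPreimage hK.isClosed p) isPreconnected_connectedComponentIn
    (connectedComponentIn_subset _ _) hx hy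
  obtain ⟨α, hαinj, hαγ⟩ := exists_injective_path γ hxy
  have hα : ∀ t, α t ∈ expPreimage K p := fun t => by
    obtain ⟨s, hs⟩ := hαγ (mem_range_self t)
    exact hs ▸ hγ s
  have hext : InjOn α.extend (Icc 0 1) := fun s hs t ht hst => by
    rw [Path.extend_apply _ hs, Path.extend_apply _ ht] at hst
    exact congrArg Subtype.val (hαinj hst)
  obtain ⟨a, b, hab, hsub, hne, hends, hinj⟩ := exists_injOn_Ico_exp α.continuous_extend hext
    zero_lt_one (by rwa [Path.extend_zero, Path.extend_one])
  obtain ⟨ψ, hψ, hψinj, hrange⟩ := exists_injective_circle_of_injOn_Ico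
    (g := fun t => p + Complex.exp (α.extend t)) hab (by fun_prop) (congrArg (p + ·) hends)
    fun s hs t ht hst => hinj hs ht (add_left_cancel hst)
  have hmem : ∀ t ∈ Icc a b, p + Complex.exp (α.extend t) ∈ range ψ := fun t ht => by
    rw [hrange]
    obtain rfl | htb := eq_or_ne t b
    · exact ⟨a, left_mem_Ico.mpr hab, congrArg (p + ·) hends⟩
    · exact mem_image_of_mem _ ⟨ht.1, ht.2.lt_of_ne htb⟩
  refine ⟨ψ, hψ, hψinj, ?_, fun ⟨l, hl, he⟩ => hne ?_⟩
  · rw [hrange]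
    rintro _ ⟨t, ht, rfl⟩
    change p + Complex.exp (α.extend t) ∈ K
    rw [Path.extend_apply _ (hsub (Ico_subset_Icc_self ht))]
    exact hα _
  · have hsame := sub_eq_sub_of_exp_eq isPreconnected_Icc (hl.comp (by fun_prop) hmem)
      α.continuous_extend.continuousOn
      (fun t ht => (he _ (hmem t ht)).trans (add_sub_cancel_left _ _))
      (left_mem_Icc.mpr hab.le) (right_mem_Icc.mpr hab.le)
    simpa only [Function.comp_apply, hends, sub_right_inj] using hsame

theorem exists_log_comp_circleExp {u : Circle → ℂ} (hu : Continuous u) (hu0 : ∀ c, u c ≠ 0) :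
    ∃ (L : ℝ → ℂ) (m : ℤ), Continuous L ∧ (∀ t, Complex.exp (L t) = u (Circle.exp t)) ∧
      ∀ t, L (t + 2 * Real.pi) = L t + m * (2 * Real.pi * Complex.I) := by
  obtain ⟨L, hL, he⟩ := exists_continuous_log (hu.comp Circle.exp.continuous) fun t => hu0 _
  have hshift : ∀ t, Complex.exp (L (t + 2 * Real.pi)) = Complex.exp (L t) := fun t => by
    rw [he, he, Function.comp_apply, Function.comp_apply, Circle.exp_add_two_pi]
  obtain ⟨m, hm⟩ := Complex.exp_eq_exp_iff_exists_int.mp (hshift 0)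
  refine ⟨L, m, hL, he, fun t => ?_⟩
  have hconst := sub_eq_sub_of_exp_eq isPreconnected_univ (by fun_prop) hL.continuousOn
    (fun t _ => hshift t) (mem_univ t) (mem_univ 0)
  rw [← sub_eq_iff_eq_add', hconst, hm, add_sub_cancel_left]

theorem hasLogOn_univ_of_periodic {u : Circle → ℂ} {L : ℝ → ℂ} (hL : Continuous L)
    (hper : L.Periodic (2 * Real.pi)) (he : ∀ t, Complex.exp (L t) = u (Circle.exp t)) :
    HasLogOn u univ := by
  have hquot : IsQuotientMap Circle.exp := Circle.isCoveringMap_exp.isQuotientMap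
    Circle.exp_surjective
  have hfactor : ∀ s t, Circle.exp s = Circle.exp t → L s = L t := fun s t hst => by
    obtain ⟨m, rfl⟩ := Circle.exp_eq_exp.mp hst
    exact hper.int_mul m t
  set l := hquot.lift ⟨L, hL⟩ hfactor
  have hl : ∀ t, l (Circle.exp t) = L t := fun t =>
    DFunLike.congr_fun (hquot.lift_comp ⟨L, hL⟩ hfactor) t
  exact ⟨l, l.continuous.continuousOn, fun c _ => by
    obtain ⟨t, rfl⟩ := Circle.exp_surjective c
    rw [hl, he]⟩

theorem exists_hasLogOn_zpow_mul_zpow {u v : Circle → ℂ} (hu : Continuous u) (hv : Continuous v)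
    (hu0 : ∀ c, u c ≠ 0) (hv0 : ∀ c, v c ≠ 0) (hlog : ¬ HasLogOn u univ) :
    ∃ m n : ℤ, n ≠ 0 ∧ HasLogOn (fun c => u c ^ m * v c ^ n) univ := by
  obtain ⟨L, n, hL, hLu, hLn⟩ := exists_log_comp_circleExp hu hu0
  obtain ⟨M, m, hM, hMv, hMm⟩ := exists_log_comp_circleExp hv hv0
  refine ⟨-m, n, ?_, hasLogOn_univ_of_periodic (L := fun t => ((-m : ℤ) : ℂ) * L t + n * M t)
    (by fun_prop) (fun t => ?_) fun t => ?_⟩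
  · rintro rfl
    exact hlog (hasLogOn_univ_of_periodic hL (fun t => by simp [hLn t]) hLu)
  · change ((-m : ℤ) : ℂ) * L (t + 2 * Real.pi) + n * M (t + 2 * Real.pi) = _
    rw [hLn, hMm]
    push_cast
    ring
  · rw [Complex.exp_add, Complex.exp_int_mul, Complex.exp_int_mul, hLu, hMv]

theorem continuousOn_invFun_range {X Y : Type*} [TopologicalSpace X] [TopologicalSpace Y]
    [Nonempty X] {ψ : X → Y} (hψ : IsEmbedding ψ) :
    ContinuousOn (Function.invFun ψ) (range ψ) := by
  rw [continuousOn_iff_continuous_domRestrict, ← hψ.toHomeomorph.comp_continuous_iff']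
  exact continuous_id.congr fun x => (Function.leftInverse_invFun hψ.injective x).symm

theorem hasLogOn_range_iff {X Y : Type*} [TopologicalSpace X] [Nonempty X] [TopologicalSpace Y]
    {ψ : X → Y} (hψ : IsEmbedding ψ) (u : Y → ℂ) :
    HasLogOn u (range ψ) ↔ HasLogOn (fun x => u (ψ x)) univ := by
  refine ⟨fun h => h.comp hψ.continuous.continuousOn fun x _ => mem_range_self x,
    fun h => (h.comp (continuousOn_invFun_range hψ) fun _ _ => mem_univ _).congr ?_⟩
  rintro _ ⟨x, rfl⟩
  exact congrArg (fun y => u (ψ y)) (Function.leftInverse_invFun hψ.injective x).symm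

-- Continue `(z - q) ^ n` from outside `O` to all of `ℂ` by `exp (l z) / (z - p) ^ m`, where `l` is
-- the given logarithm on `frontier O`; the result has no zeros, so `n` is its degree on a large
-- circle and vanishes.
theorem eq_zero_of_hasLogOn_zpow_mul_zpow_frontier {O : Set ℂ} {p q : ℂ} {m n : ℤ}
    (hO : IsOpen O) (hbdd : Bornology.IsBounded O) (hp : p ∉ closure O) (hq : q ∈ O)
    (h : HasLogOn (fun z => (z - p) ^ m * (z - q) ^ n) (frontier O)) : n = 0 := by
  classical
  obtain ⟨l, hl, he⟩ := h.exists_continuous isClosed_frontier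
  have hp0 : ∀ z ∈ closure O, z - p ≠ 0 := fun z hz =>
    sub_ne_zero.mpr (ne_of_mem_of_not_mem hz hp)
  have hq0 : ∀ z ∉ O, z - q ≠ 0 := fun z hz => sub_ne_zero.mpr (ne_of_mem_of_not_mem hq hz).symm
  set w : ℂ → ℂ := fun z => if z ∈ O then (z - p) ^ (-m) * Complex.exp (l z) else (z - q) ^ n
  have hw : Continuous w := by
    refine continuous_if (fun z hz => ?_) ?_ ?_
    · have hz0 := zpow_ne_zero m (hp0 z hz.1)
      rw [he z hz, zpow_neg, inv_mul_cancel_left₀ hz0]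
    · exact (ContinuousOn.zpow₀ (by fun_prop) _ fun z hz => Or.inl (hp0 z hz)).mul (by fun_prop)
    · refine ContinuousOn.zpow₀ (by fun_prop) _ fun z hz => Or.inl (hq0 z ?_)
      rwa [show {z | z ∉ O} = Oᶜ from rfl, hO.isClosed_compl.closure_eq] at hz
  have hw0 : ∀ z, w z ≠ 0 := fun z => by
    by_cases hz : z ∈ O
    · simpa only [w, if_pos hz] using
        mul_ne_zero (zpow_ne_zero _ (hp0 z (subset_closure hz))) (Complex.exp_ne_zero _)
    · simpa only [w, if_neg hz] using zpow_ne_zero _ (hq0 z hz)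
  obtain ⟨L, hL, hLw⟩ := exists_continuous_log hw hw0
  obtain ⟨R, hR, hOR⟩ := hbdd.subset_ball_lt 0 q
  refine eq_zero_of_hasLogOn_zpow_sphere (c := q) hR ⟨L, hL.continuousOn, fun z hz => ?_⟩
  rw [hLw]
  exact if_neg fun hzO => (mem_ball.mp (hOR hzO)).ne hz

theorem hasLogOn_sub_or_hasLogOn_inv_mul_sub {K : Set ℂ} (hK : IsCompact K) {p q : ℂ} {m n : ℤ}
    (hp : p ∉ K) (hq : q ∉ K) (hn : n ≠ 0)
    (h : HasLogOn (fun z => (z - p) ^ m * (z - q) ^ n) K) :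
    HasLogOn (fun z => z - q) K ∨ HasLogOn (fun z => (z - p)⁻¹ * (z - q)) K := by
  by_contra! hnot
  set O : Set ℂ := {x | x ∉ K ∧ ¬ HasLogOn (fun z => 1 * (z - x)) K} ∩
    {x | x ∉ K ∧ ¬ HasLogOn (fun z => (z - p)⁻¹ * (z - x)) K} with hOdef
  have hO : IsOpen O := (isOpen_setOf_not_hasLogOn_mul_sub hK.isClosed _).inter
    (isOpen_setOf_not_hasLogOn_mul_sub hK.isClosed _)
  have hOK : IsClosed (O ∪ K) := by
    have hU := (isOpen_setOf_hasLogOn_mul_sub hK.isClosed fun _ => 1).union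
      (isOpen_setOf_hasLogOn_mul_sub hK.isClosed fun z => (z - p)⁻¹)
    convert hU.isClosed_compl using 1
    ext x
    simp only [hOdef, mem_union, mem_inter_iff, mem_ofPred_eq, mem_compl_iff]
    tauto
  have hcl : closure O ⊆ O ∪ K := closure_minimal subset_union_left hOK
  have hfr : frontier O ⊆ K := fun z hz =>
    (hcl hz.1).resolve_left fun hzO => hz.2 (hO.interior_eq.symm ▸ hzO)
  have hpO : p ∉ O := fun hpO => hpO.2.2 <| (HasLogOn.const one_ne_zero K).congr fun z hz =>
    inv_mul_cancel₀ (sub_ne_zero.mpr (ne_of_mem_of_not_mem hz hp))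
  obtain ⟨R, hKR⟩ := hK.isBounded.subset_ball 0
  have hbdd : Bornology.IsBounded O := isBounded_ball.subset fun x hx => by
    by_contra hxR
    exact hx.1.2 (by simpa only [one_mul] using hasLogOn_sub_of_subset_ball hKR hxR)
  exact hn <| eq_zero_of_hasLogOn_zpow_mul_zpow_frontier hO hbdd
    (fun hpc => (hcl hpc).elim hpO hp) ⟨⟨hq, by simpa only [one_mul] using hnot.1⟩, hq, hnot.2⟩
    (h.mono hfr)

theorem prod_zpow_eq_zpow_sum₀ {ι M : Type*} [CommGroupWithZero M] {a : M} (ha : a ≠ 0)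
    (s : Finset ι) (k : ι → ℤ) : ∏ i ∈ s, a ^ k i = a ^ ∑ i ∈ s, k i := by
  classical
  induction s using Finset.induction_on with
  | empty => rw [Finset.prod_empty, Finset.sum_empty, zpow_zero]
  | insert i s hi ih => rw [Finset.prod_insert hi, Finset.sum_insert hi, zpow_add₀ ha, ih]

theorem continuousOn_circleExp_arg : ContinuousOn (fun z : ℂ => Circle.exp z.arg) {0}ᶜ :=
  fun _ hz => (AddCircle.homeomorphCircle'.continuous.continuousAt.comp
    (Complex.continuousAt_arg_coe_angle hz)).continuousWithinAt

section SimpleClosedCurve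

variable {ψ : Circle → ℂ} {p : ℂ}

theorem exists_hasLogOn_zpow_mul_sub_range (hψ : IsEmbedding ψ) (hp : p ∉ range ψ)
    (hlog : ¬ HasLogOn (fun z => z - p) (range ψ)) {q : ℂ} (hq : q ∉ range ψ) :
    ∃ k : ℤ, HasLogOn (fun z => (z - p) ^ k * (z - q)) (range ψ) := by
  have hne : ∀ {x}, x ∉ range ψ → ∀ c, ψ c - x ≠ 0 := fun hx c =>
    sub_ne_zero.mpr (ne_of_mem_of_not_mem (mem_range_self c) hx)
  have hcont := hψ.continuous
  obtain ⟨m, n, hn, hmn⟩ := exists_hasLogOn_zpow_mul_zpow (u := fun c => ψ c - p)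
    (v := fun c => ψ c - q) (by fun_prop) (by fun_prop) (hne hp) (hne hq)
    (mt (hasLogOn_range_iff hψ fun z => z - p).mpr hlog)
  obtain h | h := hasLogOn_sub_or_hasLogOn_inv_mul_sub (isCompact_range hcont) hp hq hn
    ((hasLogOn_range_iff hψ fun z => (z - p) ^ m * (z - q) ^ n).mpr hmn)
  · exact ⟨0, by simpa only [zpow_zero, one_mul] using h⟩
  · exact ⟨-1, by simpa only [zpow_neg_one] using h⟩

theorem exists_hasLogOn_mul_zpow_range (hψ : IsEmbedding ψ) (hp : p ∉ range ψ)
    (hlog : ¬ HasLogOn (fun z => z - p) (range ψ)) {u : ℂ → ℂ} (hu : ContinuousOn u (range ψ))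
    (hu0 : ∀ z ∈ range ψ, u z ≠ 0) :
    ∃ N : ℤ, HasLogOn (fun z => u z * (z - p) ^ N) (range ψ) := by
  obtain ⟨P, ε, hP, hPlog⟩ := exists_hasLogOn_mul_prod_zpow_of_isCompact
    (isCompact_range hψ.continuous) hu hu0
  have hindex : ∀ q : ℂ, ∃ k : ℤ, q ∈ P → HasLogOn (fun z => (z - p) ^ k * (z - q)) (range ψ) :=
    fun q => by
      by_cases hq : q ∈ P
      · exact (exists_hasLogOn_zpow_mul_sub_range hψ hp hlog (hP q hq)).imp fun k hk _ => hk
      · exact ⟨0, fun h => absurd h hq⟩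
  choose k hk using hindex
  have hprod := HasLogOn.finset_prod P fun q hq => (hk q hq).zpow (ε q)
  refine ⟨-∑ q ∈ P, k q * ε q, (hPlog.mul hprod.inv).congr fun z hz => ?_⟩
  have hzp : z - p ≠ 0 := sub_ne_zero.mpr (ne_of_mem_of_not_mem hz hp)
  have hzP : ∏ q ∈ P, (z - q) ^ ε q ≠ 0 := Finset.prod_ne_zero_iff.mpr fun q hq =>
    zpow_ne_zero _ (sub_ne_zero.mpr (ne_of_mem_of_not_mem hz (hP q hq)))
  simp only [mul_zpow, ← zpow_mul, Finset.prod_mul_distrib, prod_zpow_eq_zpow_sum₀ hzp, zpow_neg,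
    mul_inv]
  field_simp

theorem exists_continuousOn_compl_singleton_eqOn_range (hψ : IsEmbedding ψ) (hp : p ∉ range ψ)
    (hlog : ¬ HasLogOn (fun z => z - p) (range ψ)) {u : ℂ → ℂ} (hu : ContinuousOn u (range ψ))
    (hu0 : ∀ z ∈ range ψ, u z ≠ 0) :
    ∃ φ : ℂ → ℂ, ContinuousOn φ {p}ᶜ ∧ (∀ z ≠ p, φ z ≠ 0) ∧ EqOn φ u (range ψ) := by
  obtain ⟨N, hN⟩ := exists_hasLogOn_mul_zpow_range hψ hp hlog hu hu0
  obtain ⟨l, hl, he⟩ := hN.exists_continuous (isCompact_range hψ.continuous).isClosed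
  refine ⟨fun z => Complex.exp (l z) * (z - p) ^ (-N), ?_, fun z hz => ?_, fun z hz => ?_⟩
  · exact ContinuousOn.mul (by fun_prop) <| ContinuousOn.zpow₀ (by fun_prop) _ fun z hz =>
      Or.inl (sub_ne_zero.mpr hz)
  · exact mul_ne_zero (Complex.exp_ne_zero _) (zpow_ne_zero _ (sub_ne_zero.mpr hz))
  · have hzp : z - p ≠ 0 := sub_ne_zero.mpr (ne_of_mem_of_not_mem hz hp)
    simp only [he z hz, zpow_neg, mul_inv_cancel_right₀ (zpow_ne_zero N hzp)]

theorem exists_continuousOn_circle_leftInverse (hψ : IsEmbedding ψ) (hp : p ∉ range ψ)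
    (hlog : ¬ HasLogOn (fun z => z - p) (range ψ)) :
    ∃ r : ℂ → Circle, ContinuousOn r {p}ᶜ ∧ Function.LeftInverse r ψ := by
  obtain ⟨φ, hφ, hφ0, hφψ⟩ := exists_continuousOn_compl_singleton_eqOn_range hψ hp hlog
    (u := fun z => (Function.invFun ψ z : Circle))
    (continuous_subtype_val.comp_continuousOn (continuousOn_invFun_range hψ))
    fun z _ => Circle.coe_ne_zero _
  refine ⟨fun z => Circle.exp (φ z).arg, continuousOn_circleExp_arg.comp hφ hφ0, fun c => ?_⟩
  have hφc : φ (ψ c) = c := (hφψ (mem_range_self c)).trans <|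
    congrArg (fun c : Circle => (c : ℂ)) (Function.leftInverse_invFun hψ.injective c)
  simp only [hφc, Circle.exp_arg]

end SimpleClosedCurve

theorem not_isOfFinOrder_circleExp_one : ¬ IsOfFinOrder (Circle.exp 1) := by
  rw [isOfFinOrder_iff_pow_eq_one]
  rintro ⟨n, hn, h⟩
  rw [← Circle.exp_nsmul, nsmul_one] at h
  obtain ⟨k, hk⟩ := Circle.exp_eq_one.mp h
  have hk0 : k ≠ 0 := by
    rintro rfl
    simp [hn.ne'] at hk
  refine (irrational_pi.intCast_mul (m := k * 2) (by simpa using hk0)).ne_nat n ?_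
  rw [hk]
  push_cast
  ring

theorem periodicPts_eq_empty_of_semiconj_mul {X M : Type*} [LeftCancelMonoid M] {f : X → X}
    {r : X → M} {a : M} (hf : Function.Semiconj r f (· * a)) (ha : ¬ IsOfFinOrder a) :
    Function.periodicPts f = ∅ := by
  refine eq_empty_of_forall_notMem fun x ⟨n, hn, hx⟩ => ha ?_
  have hrx : r x * a ^ n = r x := by
    simpa only [Function.IsPeriodicPt, Function.IsFixedPt, mul_right_iterate] using hx.map hf
  exact isOfFinOrder_iff_pow_eq_one.mpr ⟨n, hn, mul_eq_left.mp hrx⟩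

theorem IsUniformlyLocallyConnected.exists_continuousOn_periodicPts_eq_empty {K : Set ℂ} {p : ℂ}
    (h : IsUniformlyLocallyConnected K) (hK : IsCompact K) (hconn : IsConnected K) (hp : p ∉ K)
    (hlog : ¬ HasLogOn (fun z => z - p) K) :
    ∃ f : ℂ → ℂ, ContinuousOn f {p}ᶜ ∧ range f ⊆ K ∧ Function.periodicPts f = ∅ := by
  obtain ⟨ψ, hψ, hinj, hψK, hlogψ⟩ := h.exists_injective_circle hK hconn hp hlog
  obtain ⟨r, hr, hrψ⟩ := exists_continuousOn_circle_leftInverse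
    (hψ.isClosedEmbedding hinj).isEmbedding (fun hpψ => hp (hψK hpψ)) hlogψ
  refine ⟨fun z => ψ (r z * Circle.exp 1), hψ.comp_continuousOn (hr.mul continuousOn_const),
    range_subset_iff.mpr fun z => hψK (mem_range_self _), ?_⟩
  exact periodicPts_eq_empty_of_semiconj_mul (fun z => hrψ _) not_isOfFinOrder_circleExp_one

theorem filledHull_subset_of_forall_periodicPts_nonempty {X K : Set ℂ}
    (h : IsUniformlyLocallyConnected K) (hK : IsCompact K) (hconn : IsConnected K) (hKX : K ⊆ X)
    (hper : ∀ f : X → X, Continuous f → (∀ z, (f z : ℂ) ∈ K) → (Function.periodicPts f).Nonempty) :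
    filledHull K ⊆ X := by
  intro p hp
  by_contra hpX
  obtain ⟨f, hf, hfK, hfper⟩ := h.exists_continuousOn_periodicPts_eq_empty hK hconn
    (fun hpK => hpX (hKX hpK)) hp
  have hXp : ∀ z : X, (z : ℂ) ∈ ({p} : Set ℂ)ᶜ := fun z => ne_of_mem_of_not_mem z.2 hpX
  have hmem : ∀ z, f z ∈ K := range_subset_iff.mp hfK
  obtain ⟨x, n, hn, hx⟩ := hper (fun z => ⟨f z, hKX (hmem z)⟩)
    ((hf.comp_continuous continuous_subtype_val hXp).subtype_mk _) fun z => hmem z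
  have hfx : (x : ℂ) ∈ Function.periodicPts f := ⟨n, hn, hx.map fun _ => rfl⟩
  exact notMem_empty _ (hfper ▸ hfx)

theorem HasFPP.of_homeomorph {Y Z : Type*} [TopologicalSpace Y] [TopologicalSpace Z]
    (e : Y ≃ₜ Z) (h : HasFPP Y) : HasFPP Z := fun f hf =>
  (h (e.symm ∘ f ∘ e) (by fun_prop)).imp' e fun _ hx => e.symm_apply_eq.mp hx

theorem HasFPP.preimage_val {Y : Type*} [TopologicalSpace Y] {H X : Set Y} (h : HasFPP H)
    (hHX : H ⊆ X) : HasFPP (Subtype.val ⁻¹' H : Set X) := by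
  have himage : Subtype.val '' (Subtype.val ⁻¹' H : Set X) = H := by
    rw [Subtype.image_preimage_coe, inter_eq_right.mpr hHX]
  exact h.of_homeomorph
    ((IsEmbedding.subtypeVal.homeomorphImage _).trans (.setCongr himage)).symm

theorem HasLFPP.of_homeomorph {Y Z : Type*} [TopologicalSpace Y] [TopologicalSpace Z]
    (e : Y ≃ₜ Z) (h : HasLFPP Y) : HasLFPP Z := by
  obtain ⟨𝓑, h𝓑, hfpp⟩ := h
  refine ⟨_, h𝓑.isInducing e.symm.isInducing, ?_⟩
  rintro _ ⟨B, hB, rfl⟩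
  rw [← e.image_eq_preimage_symm, ← e.image_closure]
  exact (hfpp B hB).of_homeomorph (e.image (closure B))

theorem HasWLPPP.of_homeomorph {Y Z : Type*} [TopologicalSpace Y] [TopologicalSpace Z]
    (e : Y ≃ₜ Z) (h : HasWLPPP Y) : HasWLPPP Z := by
  obtain ⟨𝓑, h𝓑, hper⟩ := h
  refine ⟨_, h𝓑.isInducing e.symm.isInducing, ?_⟩
  rintro _ ⟨B, hB, rfl⟩ f hf hfB
  rw [← e.symm.preimage_closure, image_subset_iff] at hfB
  obtain ⟨y, hy, n, hn, hny⟩ := hper B hB (e.symm ∘ f ∘ e) (by fun_prop) <|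
    image_subset_iff.mpr fun y hy => hfB (by simpa only [mem_preimage, e.symm_apply_apply])
  have hsemi : Function.Semiconj e (e.symm ∘ f ∘ e) f := fun y => e.apply_symm_apply _
  refine ⟨e y, by simpa only [mem_preimage, e.symm_apply_apply], n, hn, ?_⟩
  rw [← hsemi.iterate_right n y, hny]

theorem hasFPP_of_forall_continuousOn {K : Set ℂ} (hK : IsClosed K)
    (h : ∀ f : ℂ → ℂ, ContinuousOn f K → MapsTo f K K → ∃ x ∈ K, f x = x) : HasFPP K := by
  intro f hf
  obtain ⟨g, hg⟩ := ContinuousMap.exists_restrict_eq hK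
    ⟨fun z => (f z : ℂ), continuous_subtype_val.comp hf⟩
  have hgf : ∀ z : K, g z = f z := fun z => DFunLike.congr_fun hg z
  obtain ⟨x, hx, hgx⟩ := h g g.continuous.continuousOn fun z hz => hgf ⟨z, hz⟩ ▸ (f ⟨z, hz⟩).2
  exact ⟨⟨x, hx⟩, Subtype.ext ((hgf ⟨x, hx⟩).symm.trans hgx)⟩

theorem IsUniformlyLocallyConnected.hasFPP_filledHull {K : Set ℂ}
    (h : IsUniformlyLocallyConnected K) (hK : IsCompact K) (hconn : IsConnected K) :
    HasFPP (filledHull K) :=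
  hasFPP_of_forall_continuousOn (isClosed_filledHull hK.isClosed) fun _ hf hmaps =>
    exists_eq_of_forall_hasLogOn_sub (isCompact_filledHull hK)
      (isConnected_filledHull hK.isClosed hconn)
      (isUniformlyLocallyConnected_filledHull h hK.isClosed)
      (fun _ hp => hasLogOn_sub_filledHull hK.isClosed hp) hf hmaps

theorem closure_preimage_union_filledHull_sdiff {X : Set ℂ} (U : Set ℂ) :
    closure (Subtype.val ⁻¹' (U ∪ filledHull (closure (X ∩ U)) \ closure (X ∩ U)) : Set X) =
      Subtype.val ⁻¹' filledHull (closure (X ∩ U)) := by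
  set K := closure (X ∩ U)
  refine subset_antisymm (closure_minimal ?_
    ((isClosed_filledHull isClosed_closure).preimage continuous_subtype_val)) fun z hz => ?_
  · rintro z (hzU | hz)
    · exact subset_filledHull (subset_closure ⟨z.2, hzU⟩)
    · exact hz.1
  · by_cases hzK : (z : ℂ) ∈ K
    · rw [closure_subtype, Subtype.image_preimage_coe]
      exact closure_mono (inter_subset_inter_right X subset_union_left) hzK
    · exact subset_closure (Or.inr ⟨hz, hzK⟩)

theorem exists_isOpen_hasFPP_closure {X : Set ℂ} [LocallyConnectedSpace X] (hX : IsCompact X)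
    {V : Set X} (hV : IsOpen V)
    (hper : ∀ f : X → X, Continuous f → range f ⊆ V → (Function.periodicPts f).Nonempty)
    {x : X} (hx : x ∈ V) :
    ∃ B, IsOpen B ∧ x ∈ B ∧ B ⊆ V ∧ HasFPP (closure B) := by
  obtain ⟨R, hR, hRV⟩ := Metric.isOpen_iff.mp hV x hx
  obtain ⟨U, hU, hxU, hconn, hsmall, hulc⟩ :=
    (isUniformlyLocallyConnected_of_locallyConnectedSpace hX).exists_isOpen_inter_subset_ball hX
      x.2 (half_pos hR)
  have hKX : closure (X ∩ U) ⊆ X := closure_minimal inter_subset_left hX.isClosed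
  have hKball : closure (X ∩ U) ⊆ ball x R := (closure_mono hsmall).trans <|
    closure_ball_subset_closedBall.trans (closedBall_subset_ball (half_lt_self hR))
  have hK : IsCompact (closure (X ∩ U)) := hX.of_isClosed_subset isClosed_closure hKX
  have hKconn : IsConnected (closure (X ∩ U)) := ⟨⟨x, subset_closure ⟨x.2, hxU⟩⟩, hconn.closure⟩
  have hHX : filledHull (closure (X ∩ U)) ⊆ X :=
    filledHull_subset_of_forall_periodicPts_nonempty hulc hK hKconn hKX fun f hf hfK =>
      hper f hf (range_subset_iff.mpr fun z => hRV (hKball (hfK z)))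
  set B : Set X := Subtype.val ⁻¹' (U ∪ filledHull (closure (X ∩ U)) \ closure (X ∩ U))
  have hclosure : closure B = Subtype.val ⁻¹' filledHull (closure (X ∩ U)) :=
    closure_preimage_union_filledHull_sdiff U
  refine ⟨B, (hU.union (isOpen_filledHull_sdiff isClosed_closure)).preimage continuous_subtype_val,
    Or.inl hxU, fun z hz => hRV (filledHull_subset_ball hKball ?_), ?_⟩
  · exact (hclosure ▸ subset_closure hz : z ∈ Subtype.val ⁻¹' _)
  · rw [hclosure]
    exact (hulc.hasFPP_filledHull hK hKconn).preimage_val hHX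

theorem HasWLPPP.hasLFPP_of_isCompact {X : Set ℂ} [LocallyConnectedSpace X] (h : HasWLPPP X)
    (hX : IsCompact X) : HasLFPP X := by
  obtain ⟨𝓑, h𝓑, hper⟩ := h
  refine ⟨{B | IsOpen B ∧ HasFPP (closure B)},
    TopologicalSpace.isTopologicalBasis_of_isOpen_of_nhds (fun B hB => hB.1) fun x U hx hU => ?_,
    fun B hB => hB.2⟩
  obtain ⟨V, hV, hxV, hVU⟩ := h𝓑.exists_subset_of_mem_open hx hU
  obtain ⟨B, hB, hxB, hBV, hfpp⟩ := exists_isOpen_hasFPP_closure hX (h𝓑.isOpen hV)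
    (fun f hf hfV => by
      obtain ⟨y, -, n, hn, hy⟩ := hper V hV f hf ((image_subset_range _ _).trans hfV)
      exact ⟨y, n, hn, hy⟩) hxV
  exact ⟨B, ⟨hB, hfpp⟩, hxB, hBV.trans hVU⟩

theorem stmt_2_general (X : Set (EuclideanSpace ℝ (Fin 2)))
    (hcomp : IsCompact X) (hlc : LocallyConnectedSpace ↥X)
    (h : HasWLPPP ↥X) : HasLFPP ↥X := by
  let e : EuclideanSpace ℝ (Fin 2) ≃ₜ ℂ :=
    Complex.orthonormalBasisOneI.repr.symm.toHomeomorph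
  have hlc' : LocallyConnectedSpace (e '' X) :=
    (e.image X).symm.isOpenEmbedding.locallyConnectedSpace
  exact ((h.of_homeomorph (e.image X)).hasLFPP_of_isCompact
    (hcomp.image e.continuous)).of_homeomorph (e.image X).symm

/-- For a locally connected continuum in the plane, wLPPP implies LFPP. -/
theorem stmt_2 (X : Set (EuclideanSpace ℝ (Fin 2)))
    (hcomp : IsCompact X) (hconn : IsConnected X)
    (hlc : LocallyConnectedSpace ↥X)
    (h : HasWLPPP ↥X) : HasLFPP ↥X :=
  stmt_2_general X hcomp hlc h
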